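/- Asian option duality gap: Let 𝔓 = Ω and assume μ₁,…,μ_n satisfy Assumption A with M⁻_μ ≠ ∅. For the Asian payoff G(s₁,…,s_n) = ((s₁ + … + s_n)/n − K)⁺, the recursively defined functions β_i of the duality-gap theorem are the constants β_i = (n − i)/n for i = 0,…,n−1, and the put-based superhedging price satisfies V^{(p)}_μ(G) = sup_{ℙ ∈ M⁻_μ} E_ℙ[G] + (1/n) Σ_{i=1}^n (s₀ − ∫ x μ_i(dx)). -/

import Mathlib

open MeasureTheory Set Filter Topology
open scoped ENNReal NNReal Classical

noncomputable section

namespace RobustFin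

/-- Canonical path space: the values `S₀, S₁, …, S_n` of the asset. -/
abbrev Path (n : ℕ) := Fin (n + 1) → ℝ

/-- Paths starting at `s₀` with nonnegative coordinates: the canonical space `Ω`. -/
def Omega (n : ℕ) (s₀ : ℝ) : Set (Path n) := {ω | ω 0 = s₀ ∧ ∀ i, 0 ≤ ω i}

/-- The first `j` coordinates `S₁, …, S_j` of a path. -/
def restr {n : ℕ} (j : Fin n) (ω : Path n) : Fin j → ℝ :=
  fun i => ω ⟨(i : ℕ) + 1, by have h1 := i.isLt; have h2 := j.isLt; omega⟩

/-- The coordinates `S₁, …, S_n` of a path. -/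
def tailCoords {n : ℕ} (ω : Path n) : Fin n → ℝ := fun i => ω i.succ

/-- A dynamic trading strategy: bounded measurable positions `Δ_j(S₁,…,S_j)`. -/
structure Dyn (n : ℕ) where
  pos : (j : Fin n) → (Fin j → ℝ) → ℝ
  meas : ∀ j, Measurable (pos j)
  bdd : ∀ j, ∃ C, ∀ x, |pos j x| ≤ C

/-- No short selling: all dynamic positions are nonnegative. -/
def Dyn.Nonneg {n : ℕ} (D : Dyn n) : Prop := ∀ j x, 0 ≤ D.pos j x

/-- Gains from dynamic trading: `Σ_j Δ_j(S₁,…,S_j)(S_{j+1} − S_j)`. -/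
def Dyn.gains {n : ℕ} (D : Dyn n) (ω : Path n) : ℝ :=
  ∑ j : Fin n, D.pos j (restr j ω) * (ω j.succ - ω j.castSucc)

/-- A static option portfolio: a constant (cash) position plus a finite linear
combination of options with maturity indices `idx` and nonnegative strikes. -/
structure Static (n : ℕ) where
  const : ℝ
  m : ℕ
  coeff : Fin m → ℝ
  idx : Fin m → Fin n
  strike : Fin m → ℝ
  strike_nonneg : ∀ k, 0 ≤ strike k

/-- Payoff of the portfolio when the options are call options. -/
def Static.callPayoff {n : ℕ} (X : Static n) (ω : Path n) : ℝ :=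
  X.const + ∑ k, X.coeff k * max (ω (X.idx k).succ - X.strike k) 0

/-- Payoff of the portfolio when the options are put options. -/
def Static.putPayoff {n : ℕ} (X : Static n) (ω : Path n) : ℝ :=
  X.const + ∑ k, X.coeff k * max (X.strike k - ω (X.idx k).succ) 0

/-- Price of a static portfolio, given the unit option prices `c i K`;
this is the (unique) linear pricing functional determined by the prices. -/
def Static.price {n : ℕ} (X : Static n) (c : Fin n → ℝ → ℝ) : ℝ :=
  X.const + ∑ k, X.coeff k * c (X.idx k) (X.strike k)

/-- Expectation of a real payoff, valued in `EReal`, with the convention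
`∞ − ∞ = −∞` (in `EReal`, `⊤ - ⊤ = ⊥`). -/
def eexp {n : ℕ} (P : Measure (Path n)) (f : Path n → ℝ) : EReal :=
  ((∫⁻ ω, ENNReal.ofReal (f ω) ∂P : ℝ≥0∞) : EReal) -
    ((∫⁻ ω, ENNReal.ofReal (-(f ω)) ∂P : ℝ≥0∞) : EReal)

/-- The positive part of an extended real number, in `ℝ≥0∞`. -/
def posE (x : EReal) : ℝ≥0∞ := if x = ⊤ then ⊤ else ENNReal.ofReal x.toReal

/-- Expectation of an `EReal`-valued payoff, with the convention `∞ − ∞ = −∞`. -/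
def eexpE {n : ℕ} (P : Measure (Path n)) (f : Path n → EReal) : EReal :=
  ((∫⁻ ω, posE (f ω) ∂P : ℝ≥0∞) : EReal) - ((∫⁻ ω, posE (-(f ω)) ∂P : ℝ≥0∞) : EReal)

/-- A market calibrated model for the market with static payoffs `pay` (calls or puts),
prices `c` and prediction set `P`. -/
def Calibrated {n : ℕ} (pay : Static n → Path n → ℝ) (c : Fin n → ℝ → ℝ)
    (P : Set (Path n)) (Q : Measure (Path n)) : Prop :=
  IsProbabilityMeasure Q ∧ Q P = 1 ∧
    ∀ (X : Static n) (D : Dyn n), D.Nonneg →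
      eexp Q (fun ω => pay X ω + D.gains ω) ≤ (X.price c : EReal)

/-- A weak free lunch with vanishing risk. -/
def WFLVR {n : ℕ} (pay : Static n → Path n → ℝ) (c : Fin n → ℝ → ℝ)
    (P : Set (Path n)) : Prop :=
  ∃ (Xs : ℕ → Static n) (Ds : ℕ → Dyn n) (X : Static n) (D : Dyn n) (L : ℝ),
    (∀ k, (Ds k).Nonneg) ∧ D.Nonneg ∧
    (∀ ω ∈ P, Tendsto (fun k => pay (Xs k) ω + (Ds k).gains ω) atTop (nhds 0)) ∧
    (∀ k, ∀ ω ∈ P, pay X ω + D.gains ω ≤ pay (Xs k) ω + (Ds k).gains ω) ∧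
    Tendsto (fun k => (Xs k).price c) atTop (nhds L) ∧ L < 0

/-- A robust uniformly strong arbitrage. -/
def RobustArbitrage {n : ℕ} (pay : Static n → Path n → ℝ) (c : Fin n → ℝ → ℝ)
    (P : Set (Path n)) : Prop :=
  ∃ (X : Static n) (D : Dyn n), D.Nonneg ∧ X.price c < 0 ∧
    ∀ ω ∈ P, 0 ≤ pay X ω + D.gains ω

/-- The superhedging price of `G` over semi-static strategies (no short selling). -/
def V {n : ℕ} (pay : Static n → Path n → ℝ) (c : Fin n → ℝ → ℝ)
    (P : Set (Path n)) (G : Path n → EReal) : EReal :=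
  sInf {q : EReal | ∃ (X : Static n) (D : Dyn n), D.Nonneg ∧ q = (X.price c : EReal) ∧
    ∀ ω ∈ P, G ω ≤ ((pay X ω + D.gains ω : ℝ) : EReal)}

/-- The superhedging price of `G` when the dynamic positions may take both signs. -/
def Vsigned {n : ℕ} (pay : Static n → Path n → ℝ) (c : Fin n → ℝ → ℝ)
    (P : Set (Path n)) (G : Path n → EReal) : EReal :=
  sInf {q : EReal | ∃ (X : Static n) (D : Dyn n), q = (X.price c : EReal) ∧
    ∀ ω ∈ P, G ω ≤ ((pay X ω + D.gains ω : ℝ) : EReal)}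

/-- `Π_μ`: probability measures on the path space with marginals `δ_{s₀}, μ₁, …, μ_n`. -/
def PiMu {n : ℕ} (s₀ : ℝ) (μ : Fin n → Measure ℝ) : Set (Measure (Path n)) :=
  {π | IsProbabilityMeasure π ∧ π (Omega n s₀) = 1 ∧
       ∀ i : Fin n, π.map (fun ω => ω i.succ) = μ i}

/-- The coordinate process is a supermartingale in its natural filtration:
for every Borel `A ⊆ ℝ₊^j`, `∫ 1_A(S₁,…,S_j)(S_{j+1} − S_j) dπ ≤ 0`. -/
def IsSupermartingaleLaw {n : ℕ} (π : Measure (Path n)) : Prop :=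
  ∀ (j : Fin n) (A : Set (Fin j → ℝ)), MeasurableSet A →
    ∫ ω, Set.indicator A (fun _ => (1 : ℝ)) (restr j ω) * (ω j.succ - ω j.castSucc) ∂π ≤ 0

/-- `M⁻_μ`: calibrated supermartingale measures. -/
def MSet {n : ℕ} (s₀ : ℝ) (μ : Fin n → Measure ℝ) : Set (Measure (Path n)) :=
  {π ∈ PiMu s₀ μ | IsSupermartingaleLaw π}

/-- `M⁻_{μ,𝔓}`: calibrated supermartingale measures giving full mass to `P`. -/
def MSetP {n : ℕ} (s₀ : ℝ) (μ : Fin n → Measure ℝ) (P : Set (Path n)) :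
    Set (Measure (Path n)) :=
  {π ∈ MSet s₀ μ | π P = 1}

/-- Assumption A on the marginals. -/
def AssumptionA {n : ℕ} (s₀ : ℝ) (μ : Fin n → Measure ℝ) : Prop :=
  (∀ i, ∫ x, x ∂(μ i) ≤ s₀) ∧
  (∀ i j : Fin n, i ≤ j → ∫ x, x ∂(μ j) ≤ ∫ x, x ∂(μ i)) ∧
  (∀ φ : ℝ → ℝ, ConcaveOn ℝ Set.univ φ → Monotone φ → (∀ x, 0 ≤ φ x) →
    ∀ i j : Fin n, i ≤ j → ∫ x, φ x ∂(μ j) ≤ ∫ x, φ x ∂(μ i))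

/-- Condition C (i): each `c_i` is nonnegative, convex and nonincreasing on `ℝ₊`. -/
def CondC1 {n : ℕ} (c : Fin n → ℝ → ℝ) : Prop :=
  ∀ i, (∀ x, 0 ≤ x → 0 ≤ c i x) ∧ ConvexOn ℝ (Set.Ici 0) (c i) ∧ AntitoneOn (c i) (Set.Ici 0)

/-- Condition C (ii): `s₀ ≥ c₁(0) ≥ … ≥ c_n(0) ≥ 0` and `c_i'(0+) ≥ −1`
(the latter expressed, for convex `c_i`, through the slopes at `0`). -/
def CondC2 {n : ℕ} (s₀ : ℝ) (c : Fin n → ℝ → ℝ) : Prop :=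
  (∀ i, c i 0 ≤ s₀) ∧ (∀ i j : Fin n, i ≤ j → c j 0 ≤ c i 0) ∧ (∀ i, 0 ≤ c i 0) ∧
    (∀ i, ∀ K : ℝ, 0 < K → c i 0 - K ≤ c i K)

/-- Condition C (iii): `c_i(K) → 0` as `K → ∞`. -/
def CondC3 {n : ℕ} (c : Fin n → ℝ → ℝ) : Prop :=
  ∀ i, Tendsto (c i) atTop (nhds 0)

/-- Condition C (iv): for every `x ≥ 0`, `c_i(0) − c_i(x)` is nonincreasing in `i`. -/
def CondC4 {n : ℕ} (c : Fin n → ℝ → ℝ) : Prop :=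
  ∀ x : ℝ, 0 ≤ x → ∀ i j : Fin n, i ≤ j → c j 0 - c j x ≤ c i 0 - c i x

/-- Condition C. -/
def CondC {n : ℕ} (s₀ : ℝ) (c : Fin n → ℝ → ℝ) : Prop :=
  CondC1 c ∧ CondC2 s₀ c ∧ CondC3 c ∧ CondC4 c

/-- Condition P (i). -/
def CondP1 {n : ℕ} (p : Fin n → ℝ → ℝ) : Prop :=
  ∀ i, (∀ x, 0 ≤ x → 0 ≤ p i x) ∧ ConvexOn ℝ (Set.Ici 0) (p i) ∧ MonotoneOn (p i) (Set.Ici 0)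

/-- Condition P (ii): `s₀ ≥ lim (x − p₁(x)) ≥ … ≥ 0` and `0 ≤ p_i'(0+) ≤ 1`. -/
def CondP2 {n : ℕ} (s₀ : ℝ) (p : Fin n → ℝ → ℝ) : Prop :=
  (∃ L : Fin n → ℝ,
    (∀ i, Tendsto (fun x => x - p i x) atTop (nhds (L i))) ∧
    (∀ i, L i ≤ s₀) ∧ (∀ i j : Fin n, i ≤ j → L j ≤ L i) ∧ (∀ i, 0 ≤ L i)) ∧
  (∃ d : Fin n → ℝ,
    (∀ i, Tendsto (fun K => (p i K - p i 0) / K) (nhdsWithin 0 (Set.Ioi 0)) (nhds (d i))) ∧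
    (∀ i, 0 ≤ d i ∧ d i ≤ 1))

/-- Condition P (iii): `p_i(K) → 0` as `K → 0` (within `ℝ₊`). -/
def CondP3 {n : ℕ} (p : Fin n → ℝ → ℝ) : Prop :=
  ∀ i, Tendsto (p i) (nhdsWithin 0 (Set.Ici 0)) (nhds 0)

/-- Condition P (iv): `p_i(x)` is nondecreasing in `i`. -/
def CondP4 {n : ℕ} (p : Fin n → ℝ → ℝ) : Prop :=
  ∀ x : ℝ, 0 ≤ x → ∀ i j : Fin n, i ≤ j → p i x ≤ p j x

/-- Condition P. -/
def CondP {n : ℕ} (s₀ : ℝ) (p : Fin n → ℝ → ℝ) : Prop :=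
  CondP1 p ∧ CondP2 s₀ p ∧ CondP3 p ∧ CondP4 p

/-- The measures `μ_i` defined from the put prices by `μ_i([0,K]) = p_i'(K)`;
equivalently, `p_i(K) = ∫ (K − x)⁺ μ_i(dx)`. -/
def PutPricesFrom {n : ℕ} (p : Fin n → ℝ → ℝ) (μ : Fin n → Measure ℝ) : Prop :=
  (∀ i, IsProbabilityMeasure (μ i)) ∧ (∀ i, μ i (Set.Iio 0) = 0) ∧
  (∀ i, Integrable (fun x => x) (μ i)) ∧
  (∀ i, ∀ K : ℝ, 0 ≤ K → p i K = ∫ x, max (K - x) 0 ∂(μ i))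

/-- The path `(s₀, s₁, …, s_i, x, s_{i+2}, …, s_n)`. -/
def mkPath {n : ℕ} (s₀ : ℝ) (i : Fin n) (s : Fin i → ℝ) (x : ℝ)
    (t : Fin (n - ((i : ℕ) + 1)) → ℝ) : Path n := fun j =>
  if h0 : (j : ℕ) = 0 then s₀
  else if h1 : (j : ℕ) ≤ (i : ℕ) then
    s ⟨(j : ℕ) - 1, by have := j.isLt; have := i.isLt; omega⟩
  else if h2 : (j : ℕ) = (i : ℕ) + 1 then x
  else t ⟨(j : ℕ) - (i : ℕ) - 2, by have := j.isLt; have := i.isLt; omega⟩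

/-- The family `β_i : ℝ₊^i → ℝ` defined recursively by `β_n = 0` and
`β_i(s₁,…,s_i) = (sup_{s_{i+2},…,s_n} limsup_{x→∞} ((β_{i+1}(s₁,…,s_i,x)
 + G(s₁,…,s_i,x,s_{i+2},…,s_n)/x)·1_𝔓)) ∨ 0`. -/
def IsBetaFamily {n : ℕ} (s₀ : ℝ) (P : Set (Path n)) (G : (Fin n → ℝ) → EReal)
    (β : (i : Fin (n + 1)) → (Fin i → ℝ) → ℝ) : Prop :=
  (∀ s, β (Fin.last n) s = 0) ∧
  ∀ (i : Fin n) (s : Fin i → ℝ), (∀ k, 0 ≤ s k) →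
    (β ⟨(i : ℕ), by have := i.isLt; omega⟩ s : EReal) =
      max 0 (⨆ (t : Fin (n - ((i : ℕ) + 1)) → ℝ) (_ : ∀ k, 0 ≤ t k),
        Filter.limsup (fun x : ℝ =>
          if mkPath s₀ i s x t ∈ P then
            ((β ⟨(i : ℕ) + 1, by have := i.isLt; omega⟩ (Fin.snoc s x) : ℝ) : EReal)
              + G (tailCoords (mkPath s₀ i s x t)) * ((x⁻¹ : ℝ) : EReal)
          else 0) Filter.atTop)

/-- Gains of the dynamic strategy `(β_i)`: `β₀(S₁ − s₀) + Σ_i β_i(S₁,…,S_i)(S_{i+1} − S_i)`. -/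
def gainsOf {n : ℕ} (β : (i : Fin (n + 1)) → (Fin i → ℝ) → ℝ) (ω : Path n) : ℝ :=
  ∑ j : Fin n, β ⟨(j : ℕ), by have := j.isLt; omega⟩ (restr j ω) * (ω j.succ - ω j.castSucc)

/-- The penalty function `λ_𝔓(s₁,…,s_n) = (1 + s₁ + … + s_n)·1{(s₁,…,s_n) ∉ 𝔓}`. -/
def lambdaP {n : ℕ} (P : Set (Path n)) (ω : Path n) : ℝ :=
  if ω ∈ P then 0 else 1 + ∑ i : Fin n, ω i.succ

/-- `min(s₀, s₁, …, s_m)`. -/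
def pmin {m : ℕ} (s₀ : ℝ) (s : Fin m → ℝ) : ℝ :=
  Finset.univ.inf' Finset.univ_nonempty
    (fun j : Fin (m + 1) =>
      if h : (j : ℕ) = 0 then s₀ else s ⟨(j : ℕ) - 1, by have := j.isLt; omega⟩)

/-- `max(s₀, s₁, …, s_m)`. -/
def pmax {m : ℕ} (s₀ : ℝ) (s : Fin m → ℝ) : ℝ :=
  Finset.univ.sup' Finset.univ_nonempty
    (fun j : Fin (m + 1) =>
      if h : (j : ℕ) = 0 then s₀ else s ⟨(j : ℕ) - 1, by have := j.isLt; omega⟩)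


section Abstract

variable {X Y : Type*} [MeasurableSpace X] [MeasurableSpace Y]

lemma integral_diff_iff (Q : Measure X) (r : X → Y) (hr : Measurable r)
    (U W : X → ℝ) (hU : Measurable U) (hW : Measurable W) (hUi : Integrable U Q)
    (hWi : Integrable W Q) (hU0 : ∀ᵐ x ∂Q, 0 ≤ U x) (hW0 : ∀ᵐ x ∂Q, 0 ≤ W x)
    (φ : Y → ℝ) (hφ : Measurable φ) (hφ0 : ∀ y, 0 ≤ φ y) (C : ℝ) (hC : ∀ y, |φ y| ≤ C) :
    ∫ x, φ (r x) * (U x - W x) ∂Q ≤ 0 ↔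
      ∫⁻ y, ENNReal.ofReal (φ y) ∂((Q.withDensity (fun x => ENNReal.ofReal (U x))).map r) ≤
      ∫⁻ y, ENNReal.ofReal (φ y) ∂((Q.withDensity (fun x => ENNReal.ofReal (W x))).map r) := by
  have key : ∀ U : X → ℝ, Measurable U → Integrable U Q → (∀ᵐ x ∂Q, 0 ≤ U x) →
      Integrable (fun x => φ (r x) * U x) Q ∧ 0 ≤ ∫ x, φ (r x) * U x ∂Q ∧
      ∫⁻ y, ENNReal.ofReal (φ y) ∂((Q.withDensity (fun x => ENNReal.ofReal (U x))).map r) =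
        ENNReal.ofReal (∫ x, φ (r x) * U x ∂Q) := by
    intro U hU hUi hU0
    have hi : Integrable (fun x => φ (r x) * U x) Q :=
      hUi.bdd_mul (hφ.comp hr).aestronglyMeasurable (c := C)
        (Eventually.of_forall fun x => by simpa using hC (r x))
    have h0 : ∀ᵐ x ∂Q, 0 ≤ φ (r x) * U x := by
      filter_upwards [hU0] with x hx using mul_nonneg (hφ0 _) hx
    have hm : Measurable fun x => ENNReal.ofReal (φ (r x)) := (hφ.comp hr).ennreal_ofReal
    refine ⟨hi, integral_nonneg_of_ae h0, ?_⟩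
    rw [ofReal_integral_eq_lintegral_ofReal hi h0, lintegral_map hφ.ennreal_ofReal hr,
      lintegral_withDensity_eq_lintegral_mul _ hU.ennreal_ofReal hm]
    refine lintegral_congr fun x => ?_
    simp only [Pi.mul_apply]
    rw [ENNReal.ofReal_mul (hφ0 _), mul_comm]
  obtain ⟨a1, a2, a3⟩ := key U hU hUi hU0
  obtain ⟨b1, b2, b3⟩ := key W hW hWi hW0
  rw [a3, b3, ENNReal.ofReal_le_ofReal_iff b2]
  simp_rw [mul_sub]
  rw [integral_sub a1 b1, sub_nonpos]

lemma bdd_of_indicator (Q : Measure X) (r : X → Y) (hr : Measurable r)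
    (U W : X → ℝ) (hU : Measurable U) (hW : Measurable W) (hUi : Integrable U Q)
    (hWi : Integrable W Q) (hU0 : ∀ᵐ x ∂Q, 0 ≤ U x) (hW0 : ∀ᵐ x ∂Q, 0 ≤ W x)
    (h : ∀ A : Set Y, MeasurableSet A →
      ∫ x, Set.indicator A (fun _ => (1 : ℝ)) (r x) * (U x - W x) ∂Q ≤ 0)
    (φ : Y → ℝ) (hφ : Measurable φ) (hφ0 : ∀ y, 0 ≤ φ y) (C : ℝ) (hC : ∀ y, |φ y| ≤ C) :
    ∫ x, φ (r x) * (U x - W x) ∂Q ≤ 0 := by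
  rw [integral_diff_iff Q r hr U W hU hW hUi hWi hU0 hW0 φ hφ hφ0 C hC]
  refine lintegral_mono' ?_ le_rfl
  refine Measure.le_iff.2 fun A hA => ?_
  have := (integral_diff_iff Q r hr U W hU hW hUi hWi hU0 hW0 (A.indicator fun _ => 1)
    (measurable_const.indicator hA) (fun y => indicator_nonneg (fun _ _ => zero_le_one) y) 1
    (fun y => by by_cases hy : y ∈ A <;> simp [hy])).1 (h A hA)
  have e : (fun y => ENNReal.ofReal (A.indicator (fun _ => (1 : ℝ)) y)) =
      A.indicator (fun _ => (1 : ℝ≥0∞)) := by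
    ext y; by_cases hy : y ∈ A <;> simp [hy]
  rw [e, lintegral_indicator_const hA, lintegral_indicator_const hA] at this
  simpa using this

lemma indicator_of_cont {Y : Type*} [MeasurableSpace Y] [PseudoMetricSpace Y] [BorelSpace Y]
    (Q : Measure X) [IsFiniteMeasure Q] (r : X → Y) (hr : Measurable r)
    (U W : X → ℝ) (hU : Measurable U) (hW : Measurable W) (hUi : Integrable U Q)
    (hWi : Integrable W Q) (hU0 : ∀ᵐ x ∂Q, 0 ≤ U x) (hW0 : ∀ᵐ x ∂Q, 0 ≤ W x)
    (h : ∀ φ : Y → ℝ, Continuous φ → (∀ y, 0 ≤ φ y) → (∀ y, φ y ≤ 1) →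
      ∫ x, φ (r x) * (U x - W x) ∂Q ≤ 0)
    (A : Set Y) (hA : MeasurableSet A) :
      ∫ x, Set.indicator A (fun _ => (1 : ℝ)) (r x) * (U x - W x) ∂Q ≤ 0 := by
  have fin : ∀ U : X → ℝ, Integrable U Q →
      IsFiniteMeasure ((Q.withDensity (fun x => ENNReal.ofReal (U x))).map r) := by
    intro U hUi
    have : IsFiniteMeasure (Q.withDensity (fun x => ENNReal.ofReal (U x))) :=
      isFiniteMeasure_withDensity_ofReal hUi.2
    infer_instance
  have := fin U hUi
  have := fin W hWi
  have hcl : ∀ F : Set Y, IsClosed F →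
      (Q.withDensity (fun x => ENNReal.ofReal (U x))).map r F ≤
      (Q.withDensity (fun x => ENNReal.ofReal (W x))).map r F := by
    intro F hF
    refine le_of_tendsto_of_tendsto' (HasOuterApproxClosed.tendsto_lintegral_apprSeq hF _)
      (HasOuterApproxClosed.tendsto_lintegral_apprSeq hF _) fun k => ?_
    have h1 : ∀ y, (hF.apprSeq k y : ℝ) ≤ 1 := fun y =>
      NNReal.coe_le_one.2 (HasOuterApproxClosed.apprSeq_apply_le_one hF k y)
    have hc : Continuous (fun y => (hF.apprSeq k y : ℝ)) :=
      NNReal.continuous_coe.comp (hF.apprSeq k).continuous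
    have := (integral_diff_iff Q r hr U W hU hW hUi hWi hU0 hW0 (fun y => (hF.apprSeq k y : ℝ))
      hc.measurable (fun y => NNReal.coe_nonneg _) 1
      (fun y => by rw [abs_of_nonneg (NNReal.coe_nonneg _)]; exact h1 y)).1
      (h _ hc (fun y => NNReal.coe_nonneg _) h1)
    simpa using this
  rw [integral_diff_iff Q r hr U W hU hW hUi hWi hU0 hW0 (A.indicator fun _ => 1)
    (measurable_const.indicator hA) (fun y => indicator_nonneg (fun _ _ => zero_le_one) y) 1
    (fun y => by by_cases hy : y ∈ A <;> simp [hy])]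
  have e : (fun y => ENNReal.ofReal (A.indicator (fun _ => (1 : ℝ)) y)) =
      A.indicator (fun _ => (1 : ℝ≥0∞)) := by
    ext y; by_cases hy : y ∈ A <;> simp [hy]
  rw [e, lintegral_indicator_const hA, lintegral_indicator_const hA, one_mul, one_mul,
    hA.measure_eq_iSup_isClosed_of_ne_top (measure_ne_top _ _)]
  refine iSup_le fun F => iSup_le fun hFA => iSup_le fun hF => ?_
  exact (hcl F hF).trans (measure_mono hFA)

/-- Two probability measures on `ℝ₊` with the same put prices coincide. -/
lemma eq_of_puts (μ ν : Measure ℝ) [IsProbabilityMeasure μ] [IsProbabilityMeasure ν]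
    (hμ : μ (Set.Iio 0) = 0) (hν : ν (Set.Iio 0) = 0)
    (h : ∀ K : ℝ, 0 ≤ K → ∫ x, max (K - max x 0) 0 ∂μ = ∫ x, max (K - max x 0) 0 ∂ν) : μ = ν := by
  refine Measure.ext_of_Iic _ _ fun a => ?_
  rcases lt_or_ge a 0 with ha | ha
  · have : Set.Iic a ⊆ Set.Iio 0 := fun x hx => lt_of_le_of_lt hx ha
    rw [measure_mono_null this hμ, measure_mono_null this hν]
  let f : ℕ → ℝ → ℝ := fun k x =>
    ((k : ℝ) + 1) * (max ((a + 1 / ((k : ℝ) + 1)) - max x 0) 0 - max (a - max x 0) 0)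
  have hk : ∀ k : ℕ, (0 : ℝ) < 1 / ((k : ℝ) + 1) := fun k => by positivity
  have hb : ∀ k x, |f k x| ≤ 1 := by
    intro k x
    have h2 := hk k
    have h3 : ((k : ℝ) + 1) * (1 / ((k : ℝ) + 1)) = 1 := by field_simp
    have h4 : (0 : ℝ) < (k : ℝ) + 1 := by positivity
    simp only [f]
    rw [abs_mul, abs_of_pos h4]
    refine le_trans (mul_le_mul_of_nonneg_left ?_ h4.le) h3.le
    rw [abs_le]
    constructor <;> rcases max_cases (a + 1 / ((k : ℝ) + 1) - max x 0) 0 with h | h <;>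
      rcases max_cases (a - max x 0) 0 with h' | h' <;> linarith
  have hmeas : ∀ k, Measurable (f k) := by
    intro k; simp only [f]; fun_prop
  have hpt : ∀ x, Tendsto (fun k => f k x) atTop
      (𝓝 ((Set.Iic a).indicator (fun _ => (1 : ℝ)) x)) := by
    intro x
    by_cases hx : x ≤ a
    · have hx' : max x 0 ≤ a := max_le hx ha
      rw [indicator_of_mem (by exact hx)]
      refine tendsto_const_nhds.congr fun k => ?_
      have h2 := hk k
      simp only [f]
      generalize max x 0 = y at hx'
      rw [max_eq_left (by linarith), max_eq_left (by linarith)]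
      field_simp
      ring_nf
    · rw [indicator_of_notMem (by exact hx)]
      push Not at hx
      have hx' : a < max x 0 := lt_max_of_lt_left hx
      have : ∀ᶠ k : ℕ in atTop, 1 / ((k : ℝ) + 1) < max x 0 - a :=
        (tendsto_order.1 (tendsto_one_div_add_atTop_nhds_zero_nat (𝕜 := ℝ))).2 _ (by linarith)
      refine tendsto_const_nhds.congr' ?_
      filter_upwards [this] with k h2
      simp only [f]
      generalize max x 0 = y at hx' h2
      rw [max_eq_right (by linarith), max_eq_right (by linarith)]
      simp
  have lim : ∀ (ρ : Measure ℝ) [IsProbabilityMeasure ρ],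
      Tendsto (fun k => ∫ x, f k x ∂ρ) atTop (𝓝 (ρ.real (Set.Iic a))) := by
    intro ρ _
    have := tendsto_integral_of_dominated_convergence (μ := ρ) (F := f) (fun _ => 1)
      (fun k => (hmeas k).aestronglyMeasurable) (integrable_const _)
      (fun k => Eventually.of_forall fun x => by simpa using hb k x)
      (Eventually.of_forall hpt)
    rwa [integral_indicator_const _ measurableSet_Iic, smul_eq_mul, mul_one] at this
  have hputint : ∀ (ρ : Measure ℝ) [IsProbabilityMeasure ρ] (K : ℝ), 0 ≤ K →
      Integrable (fun x => max (K - max x 0) 0) ρ := by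
    intro ρ _ K hK
    refine Integrable.of_bound (by fun_prop) K (Eventually.of_forall fun x => ?_)
    rw [Real.norm_eq_abs, abs_of_nonneg (le_max_right _ _)]
    exact max_le (by linarith [le_max_right x 0]) hK
  have heq : ∀ k, ∫ x, f k x ∂μ = ∫ x, f k x ∂ν := by
    intro k
    have h2 := hk k
    simp only [f]
    rw [integral_const_mul, integral_const_mul,
      integral_sub (hputint μ _ (by linarith)) (hputint μ _ ha),
      integral_sub (hputint ν _ (by linarith)) (hputint ν _ ha), h _ (by linarith), h _ ha]
  have l1 := lim μ
  simp_rw [heq] at l1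
  have := tendsto_nhds_unique l1 (lim ν)
  exact (measureReal_eq_measureReal_iff).1 this

end Abstract
section Hedging

variable {n : ℕ}

lemma measurable_restr (j : Fin n) : Measurable (restr (n := n) j) :=
  measurable_pi_lambda _ fun _ => measurable_pi_apply _

lemma continuous_restr (j : Fin n) : Continuous (restr (n := n) j) :=
  continuous_pi fun _ => continuous_apply _

lemma meas_coord (i : Fin (n + 1)) : Measurable (fun ω : Path n => ω i) := measurable_pi_apply i

lemma isClosed_Omega (s₀ : ℝ) : IsClosed (Omega n s₀) := by
  have : Omega n s₀ = {ω | ω 0 = s₀} ∩ ⋂ i, {ω | 0 ≤ ω i} := by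
    ext ω; simp [Omega]
  rw [this]
  exact (isClosed_eq (continuous_apply 0) continuous_const).inter
    (isClosed_iInter fun i => isClosed_le continuous_const (continuous_apply i))

/-- `f` can be superhedged on `Ω` at the price `q`. -/
def Hedge (s₀ : ℝ) (c : Fin n → ℝ → ℝ) (f : Path n → ℝ) (q : ℝ) : Prop :=
  ∃ (X : Static n) (D : Dyn n), D.Nonneg ∧ X.price c = q ∧
    ∀ ω ∈ Omega n s₀, f ω ≤ X.putPayoff ω + D.gains ω

/-- Sum of dynamic strategies. -/
def Dyn.add (D E : Dyn n) : Dyn n where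
  pos j x := D.pos j x + E.pos j x
  meas j := (D.meas j).add (E.meas j)
  bdd j := by
    obtain ⟨C, hC⟩ := D.bdd j
    obtain ⟨C', hC'⟩ := E.bdd j
    exact ⟨C + C', fun x => (abs_add_le _ _).trans (add_le_add (hC x) (hC' x))⟩

lemma Dyn.add_gains (D E : Dyn n) (ω : Path n) :
    (D.add E).gains ω = D.gains ω + E.gains ω := by
  simp only [Dyn.gains, Dyn.add, add_mul, Finset.sum_add_distrib]

/-- Multiple of a dynamic strategy. -/
def Dyn.smul (a : ℝ) (D : Dyn n) : Dyn n where
  pos j x := a * D.pos j x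
  meas j := (D.meas j).const_mul a
  bdd j := by
    obtain ⟨C, hC⟩ := D.bdd j
    exact ⟨|a| * C, fun x => by
      rw [abs_mul]; exact mul_le_mul_of_nonneg_left (hC x) (abs_nonneg a)⟩

lemma Dyn.smul_gains (a : ℝ) (D : Dyn n) (ω : Path n) :
    (D.smul a).gains ω = a * D.gains ω := by
  simp only [Dyn.gains, Dyn.smul, Finset.mul_sum, mul_assoc]

/-- Constant positions. -/
def Dyn.ofConst (b : Fin n → ℝ) : Dyn n where
  pos j _ := b j
  meas _ := measurable_const
  bdd j := ⟨|b j|, fun _ => le_rfl⟩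

/-- A position at a single date. -/
def Dyn.single (j : Fin n) (φ : (Fin j → ℝ) → ℝ) (hφ : Measurable φ)
    (C : ℝ) (hC : ∀ x, |φ x| ≤ C) : Dyn n where
  pos i := if h : i = j then fun x => φ (fun k => x ⟨k, by rw [h]; exact k.isLt⟩) else fun _ => 0
  meas i := by
    by_cases h : i = j
    · subst h; simpa using hφ
    · simp only [h, dite_false]; exact measurable_const
  bdd i := by
    by_cases h : i = j
    · subst h; exact ⟨C, by simpa using hC⟩
    · exact ⟨0, by simp [h]⟩

lemma Dyn.single_gains (j : Fin n) (φ : (Fin j → ℝ) → ℝ) (hφ : Measurable φ)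
    (C : ℝ) (hC : ∀ x, |φ x| ≤ C) (ω : Path n) :
    (Dyn.single j φ hφ C hC).gains ω = φ (restr j ω) * (ω j.succ - ω j.castSucc) := by
  rw [Dyn.gains, Finset.sum_eq_single j]
  · simp [Dyn.single]
  · intro b _ hb; simp [Dyn.single, hb]
  · simp

/-- Sum of static portfolios. -/
def Static.add (X Y : Static n) : Static n where
  const := X.const + Y.const
  m := X.m + Y.m
  coeff := Fin.append X.coeff Y.coeff
  idx := Fin.append X.idx Y.idx
  strike := Fin.append X.strike Y.strike
  strike_nonneg k := by
    refine Fin.addCases (fun i => ?_) (fun i => ?_) k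
    · simpa using X.strike_nonneg i
    · simpa using Y.strike_nonneg i

lemma Static.add_putPayoff (X Y : Static n) (ω : Path n) :
    (X.add Y).putPayoff ω = X.putPayoff ω + Y.putPayoff ω := by
  have := Fin.sum_univ_add (fun k : Fin (X.m + Y.m) => Fin.append X.coeff Y.coeff k *
    max (Fin.append X.strike Y.strike k - ω (Fin.append X.idx Y.idx k).succ) 0)
  simp only [Fin.append_left, Fin.append_right] at this
  refine (congrArg (fun z => X.const + Y.const + z) this).trans ?_
  simp only [Static.putPayoff]
  ring

lemma Static.add_price (X Y : Static n) (c : Fin n → ℝ → ℝ) :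
    (X.add Y).price c = X.price c + Y.price c := by
  have := Fin.sum_univ_add (fun k : Fin (X.m + Y.m) => Fin.append X.coeff Y.coeff k *
    c (Fin.append X.idx Y.idx k) (Fin.append X.strike Y.strike k))
  simp only [Fin.append_left, Fin.append_right] at this
  refine (congrArg (fun z => X.const + Y.const + z) this).trans ?_
  simp only [Static.price]
  ring

/-- Multiple of a static portfolio. -/
def Static.smul (a : ℝ) (X : Static n) : Static n where
  const := a * X.const
  m := X.m
  coeff k := a * X.coeff k
  idx := X.idx
  strike := X.strike
  strike_nonneg := X.strike_nonneg

lemma Static.smul_putPayoff (a : ℝ) (X : Static n) (ω : Path n) :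
    (X.smul a).putPayoff ω = a * X.putPayoff ω := by
  simp only [Static.putPayoff, Static.smul, mul_add, Finset.mul_sum, mul_assoc]; rfl

lemma Static.smul_price (a : ℝ) (X : Static n) (c : Fin n → ℝ → ℝ) :
    (X.smul a).price c = a * X.price c := by
  simp only [Static.price, Static.smul, mul_add, Finset.mul_sum, mul_assoc]; rfl

/-- Cash. -/
def Static.cash (a : ℝ) : Static n where
  const := a
  m := 0
  coeff k := k.elim0
  idx k := k.elim0
  strike k := k.elim0
  strike_nonneg k := k.elim0

lemma Static.cash_price (a : ℝ) (c : Fin n → ℝ → ℝ) : (Static.cash a).price c = a :=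
  (congrArg (fun z => a + z) (Finset.sum_eq_zero fun k _ => k.elim0)).trans (add_zero a)

lemma Static.cash_putPayoff (a : ℝ) (ω : Path n) : (Static.cash a).putPayoff ω = a :=
  (congrArg (fun z => a + z) (Finset.sum_eq_zero fun k _ => k.elim0)).trans (add_zero a)

/-- A multiple of a single put. -/
def Static.put (a : ℝ) (i : Fin n) (K : ℝ) (hK : 0 ≤ K) : Static n where
  const := 0
  m := 1
  coeff _ := a
  idx _ := i
  strike _ := K
  strike_nonneg _ := hK

lemma Static.put_price (a : ℝ) (i : Fin n) (K : ℝ) (hK : 0 ≤ K) (c : Fin n → ℝ → ℝ) :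
    (Static.put a i K hK).price c = a * c i K := by
  have := Fin.sum_univ_one (fun _ : Fin 1 => a * c i K)
  exact (congrArg (fun z => 0 + z) this).trans (zero_add _)

lemma Static.put_putPayoff (a : ℝ) (i : Fin n) (K : ℝ) (hK : 0 ≤ K) (ω : Path n) :
    (Static.put a i K hK).putPayoff ω = a * max (K - ω i.succ) 0 := by
  have := Fin.sum_univ_one (fun _ : Fin 1 => a * max (K - ω i.succ) 0)
  exact (congrArg (fun z => 0 + z) this).trans (zero_add _)

variable {s₀ : ℝ} {c : Fin n → ℝ → ℝ}

lemma Hedge.add {f g : Path n → ℝ} {q r : ℝ} (hf : Hedge s₀ c f q) (hg : Hedge s₀ c g r) :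
    Hedge s₀ c (fun ω => f ω + g ω) (q + r) := by
  obtain ⟨X, D, hD, rfl, h⟩ := hf
  obtain ⟨Y, E, hE, rfl, h'⟩ := hg
  refine ⟨X.add Y, D.add E, fun j x => add_nonneg (hD j x) (hE j x), X.add_price Y c, ?_⟩
  intro ω hω
  rw [Static.add_putPayoff, Dyn.add_gains]
  linarith [h ω hω, h' ω hω]

lemma Hedge.smul {f : Path n → ℝ} {q a : ℝ} (ha : 0 ≤ a) (hf : Hedge s₀ c f q) :
    Hedge s₀ c (fun ω => a * f ω) (a * q) := by
  obtain ⟨X, D, hD, rfl, h⟩ := hf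
  refine ⟨X.smul a, D.smul a, fun j x => mul_nonneg ha (hD j x), X.smul_price a c, ?_⟩
  intro ω hω
  rw [Static.smul_putPayoff, Dyn.smul_gains, ← mul_add]
  exact mul_le_mul_of_nonneg_left (h ω hω) ha

lemma Hedge.mono {f g : Path n → ℝ} {q : ℝ} (hf : Hedge s₀ c f q)
    (h : ∀ ω ∈ Omega n s₀, g ω ≤ f ω) : Hedge s₀ c g q := by
  obtain ⟨X, D, hD, rfl, h'⟩ := hf
  exact ⟨X, D, hD, rfl, fun ω hω => (h ω hω).trans (h' ω hω)⟩

lemma Hedge.cash (a : ℝ) : Hedge (n := n) s₀ c (fun _ => a) a :=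
  ⟨Static.cash a, Dyn.ofConst 0, fun _ _ => le_rfl, by simp [Static.cash_price],
    fun ω _ => by simp [Static.cash_putPayoff, Dyn.gains, Dyn.ofConst]⟩

lemma Hedge.put (a : ℝ) (i : Fin n) (K : ℝ) (hK : 0 ≤ K) :
    Hedge s₀ c (fun ω => a * max (K - ω i.succ) 0) (a * c i K) :=
  ⟨Static.put a i K hK, Dyn.ofConst 0, fun _ _ => le_rfl, by simp [Static.put_price],
    fun ω _ => by simp [Static.put_putPayoff, Dyn.gains, Dyn.ofConst]⟩

lemma Hedge.dyn (D : Dyn n) (hD : D.Nonneg) : Hedge s₀ c (fun ω => D.gains ω) 0 :=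
  ⟨Static.cash 0, D, hD, by simp [Static.cash_price],
    fun ω _ => by simp [Static.cash_putPayoff]⟩

lemma Hedge.sum {ι : Type*} (s : Finset ι) (f : ι → Path n → ℝ) (q : ι → ℝ)
    (h : ∀ i ∈ s, Hedge s₀ c (f i) (q i)) :
    Hedge s₀ c (fun ω => ∑ i ∈ s, f i ω) (∑ i ∈ s, q i) := by
  induction s using Finset.induction_on with
  | empty => simpa using Hedge.cash (n := n) (s₀ := s₀) (c := c) 0
  | insert a s ha ih =>
    simp only [Finset.sum_insert ha]
    exact (h a (Finset.mem_insert_self _ _)).add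
      (ih fun i hi => h i (Finset.mem_insert_of_mem hi))

end Hedging

section Model

variable {n : ℕ} {s₀ : ℝ} {μ : Fin n → Measure ℝ} {Q : Measure (Path n)}

lemma PiMu.ae_mem (hQ : Q ∈ PiMu s₀ μ) : ∀ᵐ ω ∂Q, ω ∈ Omega n s₀ := by
  obtain ⟨hp, h1, -⟩ := hQ
  exact (prob_compl_eq_zero_iff (isClosed_Omega s₀).measurableSet).2 h1

lemma PiMu.integrable_succ (hQ : Q ∈ PiMu s₀ μ) (hmom : ∀ i, Integrable (fun x => x) (μ i))
    (i : Fin n) : Integrable (fun ω => ω i.succ) Q := by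
  have h := hmom i
  rw [← hQ.2.2 i] at h
  exact (integrable_map_measure (by fun_prop) (meas_coord _).aemeasurable).1 h

lemma PiMu.integrable (hQ : Q ∈ PiMu s₀ μ) (hmom : ∀ i, Integrable (fun x => x) (μ i))
    (i : Fin (n + 1)) : Integrable (fun ω => ω i) Q := by
  have := hQ.1
  refine Fin.cases ?_ (fun i => PiMu.integrable_succ hQ hmom i) i
  refine (integrable_const s₀).congr ?_
  filter_upwards [PiMu.ae_mem hQ] with ω hω using hω.1.symm

lemma PiMu.integral_comp (hQ : Q ∈ PiMu s₀ μ) (i : Fin n) (f : ℝ → ℝ) (hf : Measurable f) :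
    ∫ ω, f (ω i.succ) ∂Q = ∫ x, f x ∂(μ i) := by
  rw [← hQ.2.2 i, integral_map (meas_coord _).aemeasurable hf.aestronglyMeasurable]

lemma PiMu.integrable_put (hQ : Q ∈ PiMu s₀ μ) (i : Fin n) (K : ℝ) (hK : 0 ≤ K) :
    Integrable (fun ω => max (K - ω i.succ) 0) Q := by
  have := hQ.1
  refine Integrable.of_bound
    ((measurable_const.sub (meas_coord _)).max measurable_const).aestronglyMeasurable K ?_
  filter_upwards [PiMu.ae_mem hQ] with ω hω
  rw [Real.norm_eq_abs, abs_of_nonneg (le_max_right _ _)]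
  exact max_le (by linarith [hω.2 i.succ]) hK

lemma MSet.integrable_gain (hQ : Q ∈ MSet s₀ μ) (hmom : ∀ i, Integrable (fun x => x) (μ i))
    (D : Dyn n) (j : Fin n) :
    Integrable (fun ω => D.pos j (restr j ω) * (ω j.succ - ω j.castSucc)) Q := by
  obtain ⟨C, hC⟩ := D.bdd j
  exact ((PiMu.integrable hQ.1 hmom _).sub (PiMu.integrable hQ.1 hmom _)).bdd_mul
    ((D.meas j).comp (measurable_restr j)).aestronglyMeasurable (c := C)
    (Eventually.of_forall fun x => by simpa using hC _)

lemma MSet.integral_gains (hQ : Q ∈ MSet s₀ μ) (hmom : ∀ i, Integrable (fun x => x) (μ i))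
    (D : Dyn n) (hD : ∀ (j : Fin n) (x : Fin j → ℝ), (∀ k, 0 ≤ x k) → 0 ≤ D.pos j x) :
    Integrable D.gains Q ∧ ∫ ω, D.gains ω ∂Q ≤ 0 := by
  have hi := MSet.integrable_gain hQ hmom D
  have e : D.gains = fun ω => ∑ j : Fin n, D.pos j (restr j ω) * (ω j.succ - ω j.castSucc) := rfl
  rw [e]
  refine ⟨integrable_finsetSum _ fun j _ => hi j, ?_⟩
  rw [integral_finsetSum _ fun j _ => hi j]
  refine Finset.sum_nonpos fun j _ => ?_
  obtain ⟨C, hC⟩ := D.bdd j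
  have hm := PiMu.ae_mem hQ.1
  have := bdd_of_indicator Q (restr j) (measurable_restr j) (fun ω => ω j.succ)
    (fun ω => ω j.castSucc) (measurable_pi_apply _) (measurable_pi_apply _)
    (PiMu.integrable hQ.1 hmom _) (PiMu.integrable hQ.1 hmom _)
    (by filter_upwards [hm] with ω hω using hω.2 _)
    (by filter_upwards [hm] with ω hω using hω.2 _)
    (hQ.2 j) (fun x => max (D.pos j x) 0) ((D.meas j).max measurable_const)
    (fun x => le_max_right _ _) C (fun x => by
      rw [abs_of_nonneg (le_max_right _ _)]
      exact max_le ((le_abs_self _).trans (hC x)) ((abs_nonneg _).trans (hC x)))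
  refine le_trans (le_of_eq (integral_congr_ae ?_)) this
  filter_upwards [hm] with ω hω
  rw [max_eq_left (hD j (restr j ω) fun k => hω.2 _)]

lemma MSet.integral_static (hQ : Q ∈ MSet s₀ μ) (X : Static n) :
    Integrable X.putPayoff Q ∧
      ∫ ω, X.putPayoff ω ∂Q = X.price (fun i K' => ∫ x, max (K' - x) 0 ∂(μ i)) := by
  have := hQ.1.1
  have hi : ∀ k, Integrable (fun ω : Path n => X.coeff k * max (X.strike k - ω (X.idx k).succ) 0) Q :=
    fun k => (PiMu.integrable_put hQ.1 _ _ (X.strike_nonneg k)).const_mul _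
  have e : X.putPayoff = fun ω => X.const + ∑ k, X.coeff k * max (X.strike k - ω (X.idx k).succ) 0 :=
    rfl
  rw [e]
  refine ⟨(integrable_const _).add (integrable_finsetSum _ fun k _ => hi k), ?_⟩
  rw [integral_add (integrable_const _) (integrable_finsetSum _ fun k _ => hi k),
    integral_finsetSum _ fun k _ => hi k, Static.price]
  simp only [integral_const, probReal_univ, smul_eq_mul, one_mul]
  congr 1
  refine Finset.sum_congr rfl fun k _ => ?_
  rw [integral_const_mul]
  congr 1
  exact PiMu.integral_comp hQ.1 (X.idx k) (fun x => max (X.strike k - x) 0) (by fun_prop)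

lemma MSet.le_price (hQ : Q ∈ MSet s₀ μ) (hmom : ∀ i, Integrable (fun x => x) (μ i))
    (X : Static n) (D : Dyn n) (hD : ∀ (j : Fin n) (x : Fin j → ℝ), (∀ k, 0 ≤ x k) → 0 ≤ D.pos j x)
    (f : Path n → ℝ) (hf : Integrable f Q)
    (h : ∀ ω ∈ Omega n s₀, f ω ≤ X.putPayoff ω + D.gains ω) :
    ∫ ω, f ω ∂Q ≤ X.price (fun i K' => ∫ x, max (K' - x) 0 ∂(μ i)) := by
  obtain ⟨a1, a2⟩ := MSet.integral_static hQ X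
  obtain ⟨b1, b2⟩ := MSet.integral_gains hQ hmom D hD
  have : ∫ ω, f ω ∂Q ≤ ∫ ω, (X.putPayoff ω + D.gains ω) ∂Q :=
    integral_mono_ae hf (a1.add b1) (by
      filter_upwards [PiMu.ae_mem hQ.1] with ω hω using h ω hω)
  rw [integral_add a1 b1, a2] at this
  linarith

end Model
section Riesz

open BoundedContinuousFunction CompactlySupported

/-- A positive normalized tight functional on bounded continuous functions is an expectation. -/
lemma exists_measure_of_tight {X : Type*} [TopologicalSpace X] [T2Space X] [LocallyCompactSpace X]
    [MeasurableSpace X] [BorelSpace X] (L : (X →ᵇ ℝ) →ₗ[ℝ] ℝ)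
    (hpos : ∀ f : X →ᵇ ℝ, (∀ x, 0 ≤ f x) → 0 ≤ L f) (hone : L 1 = 1)
    (χ : ℕ → X →ᵇ ℝ) (hχc : ∀ k, HasCompactSupport (χ k)) (hχ0 : ∀ k x, 0 ≤ χ k x)
    (hχ1 : ∀ k x, χ k x ≤ 1) (hχ : ∀ x, Tendsto (fun k => χ k x) atTop (𝓝 1))
    (ht : Tendsto (fun k => L (1 - χ k)) atTop (𝓝 0)) :
    ∃ Q : Measure X, IsProbabilityMeasure Q ∧ ∀ f : X →ᵇ ℝ, ∫ x, f x ∂Q = L f := by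
  have hmono : ∀ f g : X →ᵇ ℝ, (∀ x, f x ≤ g x) → L f ≤ L g := by
    intro f g h
    have := hpos (g - f) (fun x => by simpa using h x)
    rw [map_sub] at this
    linarith
  let Λ : C_c(X, ℝ) →ₚ[ℝ] ℝ := PositiveLinearMap.mk₀
    { toFun := fun f => L f.toBoundedContinuousFunction
      map_add' := fun f g => by
        rw [← map_add]; rfl
      map_smul' := fun a f => by
        rw [RingHom.id_apply, ← map_smul]; rfl }
    (fun f hf => hpos _ fun x => hf x)
  let Q := RealRMK.rieszMeasure Λ
  have hreg : Q.Regular := inferInstanceAs (RealRMK.rieszMeasure Λ).Regular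
  have hΛ : ∀ (f : X →ᵇ ℝ), HasCompactSupport f → Integrable f Q ∧ ∫ x, f x ∂Q = L f := by
    intro f hf
    refine ⟨f.continuous.integrable_of_hasCompactSupport hf, ?_⟩
    have := RealRMK.integral_rieszMeasure Λ ⟨f.toContinuousMap, hf⟩
    exact this
  have hfin : Q Set.univ ≤ 1 := by
    have h1 : ∀ k, ∫⁻ x, ENNReal.ofReal (χ k x) ∂Q ≤ 1 := by
      intro k
      rw [← ofReal_integral_eq_lintegral_ofReal (hΛ _ (hχc k)).1
        (Eventually.of_forall (hχ0 k)), (hΛ _ (hχc k)).2, ← ENNReal.ofReal_one]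
      apply ENNReal.ofReal_le_ofReal
      rw [← hone]
      exact hmono _ _ fun x => by simpa using hχ1 k x
    have h2 : ∀ x, liminf (fun k => ENNReal.ofReal (χ k x)) atTop = 1 := by
      intro x
      have := (ENNReal.continuous_ofReal.tendsto 1).comp (hχ x)
      rw [ENNReal.ofReal_one] at this
      exact this.liminf_eq
    have h3 := lintegral_liminf_le (μ := Q) (u := (atTop : Filter ℕ))
      (f := fun k x => ENNReal.ofReal (χ k x))
      (fun k => (χ k).continuous.measurable.ennreal_ofReal)
    simp_rw [h2] at h3
    rw [lintegral_one] at h3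
    refine h3.trans ?_
    refine liminf_le_of_le (by isBoundedDefault) fun b hb => ?_
    obtain ⟨k, hk⟩ := hb.exists
    exact hk.trans (h1 k)
  have hQf : IsFiniteMeasure Q := ⟨hfin.trans_lt ENNReal.one_lt_top⟩
  have hrep : ∀ f : X →ᵇ ℝ, ∫ x, f x ∂Q = L f := by
    intro f
    have t1 : Tendsto (fun k => ∫ x, (f * χ k) x ∂Q) atTop (𝓝 (∫ x, f x ∂Q)) := by
      refine tendsto_integral_of_dominated_convergence (fun _ => ‖f‖)
        (fun k => (f * χ k).continuous.measurable.aestronglyMeasurable) (integrable_const _) ?_ ?_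
      · intro k
        refine Eventually.of_forall fun x => ?_
        rw [BoundedContinuousFunction.mul_apply, norm_mul, Real.norm_eq_abs (χ k x),
          abs_of_nonneg (hχ0 k x)]
        exact (mul_le_of_le_one_right (norm_nonneg _) (hχ1 k x)).trans (f.norm_coe_le_norm x)
      · refine Eventually.of_forall fun x => ?_
        simpa using (hχ x).const_mul (f x)
    have t2 : Tendsto (fun k => L (f * χ k)) atTop (𝓝 (L f)) := by
      have t3 : Tendsto (fun k => ‖f‖ * L (1 - χ k)) atTop (𝓝 0) := by
        simpa using ht.const_mul ‖f‖
      refine tendsto_iff_norm_sub_tendsto_zero.2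
        (squeeze_zero (fun k => norm_nonneg _) (fun k => ?_) t3)
      have hx : ∀ x, |f x| ≤ ‖f‖ := fun x => f.norm_coe_le_norm x
      have a1 := hmono (f * χ k - f) (‖f‖ • (1 - χ k)) (fun x => by
        have h0 := hχ1 k x
        have := (abs_le.1 (hx x)).1
        simp only [BoundedContinuousFunction.sub_apply, BoundedContinuousFunction.mul_apply,
          BoundedContinuousFunction.smul_apply, smul_eq_mul,
          BoundedContinuousFunction.coe_one, Pi.one_apply]
        nlinarith)
      have a2 := hmono (f - f * χ k) (‖f‖ • (1 - χ k)) (fun x => by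
        have h0 := hχ1 k x
        have := (abs_le.1 (hx x)).2
        simp only [BoundedContinuousFunction.sub_apply, BoundedContinuousFunction.mul_apply,
          BoundedContinuousFunction.smul_apply, smul_eq_mul,
          BoundedContinuousFunction.coe_one, Pi.one_apply]
        nlinarith)
      rw [map_smul, map_sub, smul_eq_mul] at a1 a2
      rw [Real.norm_eq_abs, abs_le]
      constructor <;> linarith
    refine tendsto_nhds_unique t1 (t2.congr fun k => ((hΛ (f * χ k) ?_).2).symm)
    exact (hχc k).mul_left
  refine ⟨Q, ⟨?_⟩, hrep⟩
  have := hrep 1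
  rw [hone] at this
  simp only [BoundedContinuousFunction.coe_one, Pi.one_apply, integral_const, smul_eq_mul, mul_one,
    measureReal_def] at this
  rwa [ENNReal.toReal_eq_one_iff] at this

end Riesz

section Duality

open BoundedContinuousFunction

variable {n : ℕ} {s₀ : ℝ} {μ : Fin n → Measure ℝ}

/-- The put prices. -/
abbrev putPrice (μ : Fin n → Measure ℝ) : Fin n → ℝ → ℝ :=
  fun i K' => ∫ x, max (K' - x) 0 ∂(μ i)

/-- Hahn-Banach: a functional dominated by the superhedging price, touching it at `G`. -/
lemma exists_functional (c : Fin n → ℝ → ℝ) (G : Path n →ᵇ ℝ) (hG : G ≠ 0)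
    (hb : ∀ f : Path n →ᵇ ℝ, ∃ B, ∀ q, Hedge s₀ c f q → B ≤ q) :
    ∃ L : (Path n →ᵇ ℝ) →ₗ[ℝ] ℝ, (∀ (f : Path n →ᵇ ℝ) q, Hedge s₀ c f q → L f ≤ q) ∧
      ∀ ε > 0, ∃ q, q < L G + ε ∧ Hedge s₀ c G q := by
  let N : (Path n →ᵇ ℝ) → ℝ := fun f => sInf {q | Hedge s₀ c f q}
  have hbdd : ∀ f : Path n →ᵇ ℝ, BddBelow {q | Hedge s₀ c f q} := fun f => by
    obtain ⟨B, hB⟩ := hb f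
    exact ⟨B, fun q hq => hB q hq⟩
  have hnon : ∀ f : Path n →ᵇ ℝ, {q | Hedge s₀ c f q}.Nonempty := fun f =>
    ⟨‖f‖, (Hedge.cash ‖f‖).mono fun ω _ => (le_abs_self _).trans (f.norm_coe_le_norm ω)⟩
  have hN : ∀ (f : Path n →ᵇ ℝ) q, Hedge s₀ c f q → N f ≤ q := fun f q hq =>
    csInf_le (hbdd f) hq
  have hle : ∀ a : ℝ, 0 < a → ∀ f, N (a • f) ≤ a * N f := by
    intro a ha f
    rw [← div_le_iff₀' ha]
    refine le_csInf (hnon f) fun q hq => ?_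
    rw [div_le_iff₀' ha]
    exact hN _ _ (Hedge.smul ha.le hq)
  have hhom : ∀ a : ℝ, 0 < a → ∀ f, N (a • f) = a * N f := by
    intro a ha f
    refine le_antisymm (hle a ha f) ?_
    have := hle a⁻¹ (inv_pos.2 ha) (a • f)
    rw [smul_smul, inv_mul_cancel₀ ha.ne', one_smul] at this
    calc a * N f ≤ a * (a⁻¹ * N (a • f)) := mul_le_mul_of_nonneg_left this ha.le
      _ = N (a • f) := by field_simp
  have hadd : ∀ f g, N (f + g) ≤ N f + N g := by
    intro f g
    have : ∀ q, Hedge s₀ c f q → N (f + g) - q ≤ N g := fun q hq =>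
      le_csInf (hnon g) fun r hr => by
        have := hN (f + g) (q + r) (hq.add hr)
        linarith
    have : N (f + g) - N g ≤ N f := le_csInf (hnon f) fun q hq => by
      have := this q hq
      linarith
    linarith
  have h0 : N 0 = 0 := by
    have := hhom 2 two_pos 0
    rw [smul_zero] at this
    linarith
  obtain ⟨L, hL1, hL2⟩ := exists_extension_of_le_sublinear
    (LinearPMap.mkSpanSingleton G (N G) hG) N hhom hadd (by
      rintro ⟨x, hx⟩
      obtain ⟨t, rfl⟩ := Submodule.mem_span_singleton.1 hx
      rw [LinearPMap.mkSpanSingleton'_apply]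
      simp only [smul_eq_mul, RingHom.id_apply]
      rcases lt_trichotomy t 0 with ht | rfl | ht
      · have h1 := hadd (t • G) ((-t) • G)
        rw [hhom (-t) (by linarith), ← add_smul, add_neg_cancel, zero_smul, h0] at h1
        linarith
      · simp [h0]
      · rw [hhom t ht])
  have hLG : L G = N G := by
    have := hL1 ⟨G, Submodule.mem_span_singleton_self G⟩
    rw [this]
    exact LinearPMap.mkSpanSingleton_apply ℝ ℝ hG (N G)
  refine ⟨L, fun f q hq => (hL2 f).trans (hN f q hq), fun ε hε => ?_⟩
  rw [hLG]
  obtain ⟨q, hq, hq'⟩ := exists_lt_of_csInf_lt (hnon G) (show N G < N G + ε by linarith)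
  exact ⟨q, hq', hq⟩

end Duality
section Representation

open BoundedContinuousFunction

variable {n : ℕ} {s₀ : ℝ} {μ : Fin n → Measure ℝ}

/-- The cutoff `min(1, (2 - |x|/R)⁺)`. -/
def cut (R x : ℝ) : ℝ := max 0 (min 1 (2 - |x| / R))

lemma cut_nonneg (R x : ℝ) : 0 ≤ cut R x := le_max_left _ _

lemma cut_le_one (R x : ℝ) : cut R x ≤ 1 := max_le zero_le_one (min_le_left _ _)

lemma continuous_cut (R : ℝ) : Continuous (cut R) := by
  unfold cut; fun_prop

lemma cut_eq_one {R x : ℝ} (hR : 0 < R) (h : |x| ≤ R) : cut R x = 1 := by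
  have : |x| / R ≤ 1 := (div_le_one hR).2 h
  rw [cut, min_eq_left (by linarith), max_eq_right zero_le_one]

lemma cut_eq_zero {R x : ℝ} (hR : 0 < R) (h : 2 * R ≤ |x|) : cut R x = 0 := by
  have : 2 ≤ |x| / R := (le_div_iff₀ hR).2 h
  rw [cut, max_eq_left ((min_le_right _ _).trans (by linarith))]

lemma cut_mul_abs {R : ℝ} (hR : 0 < R) (x : ℝ) : cut R x * |x| ≤ 2 * R := by
  rcases le_total (2 * R) |x| with h | h
  · rw [cut_eq_zero hR h, zero_mul]; positivity
  · calc cut R x * |x| ≤ 1 * |x| := mul_le_mul_of_nonneg_right (cut_le_one R x) (abs_nonneg x)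
      _ ≤ 2 * R := by linarith

lemma cut_anti {R x y : ℝ} (hR : 0 < R) (h : |x| ≤ |y|) : cut R y ≤ cut R x := by
  unfold cut
  have : |x| / R ≤ |y| / R := div_le_div_of_nonneg_right h hR.le
  gcongr

/-- On `ℝ₊` the cutoff is a put spread. -/
lemma cut_eq_puts {R x : ℝ} (hR : 0 < R) (hx : 0 ≤ x) :
    cut R x = 1 / R * max (2 * R - x) 0 - 1 / R * max (R - x) 0 := by
  rcases le_total x R with h | h
  · rw [cut_eq_one hR (by rwa [abs_of_nonneg hx]), max_eq_left (by linarith),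
      max_eq_left (by linarith)]
    field_simp; ring
  rcases le_total x (2 * R) with h' | h'
  · have h1 : 1 ≤ x / R := (one_le_div hR).2 h
    have h2 : x / R ≤ 2 := (div_le_iff₀ hR).2 h'
    rw [cut, abs_of_nonneg hx, min_eq_right (by linarith), max_eq_right (by linarith),
      max_eq_left (by linarith), max_eq_right (by linarith)]
    field_simp; ring
  · rw [cut_eq_zero hR (by rwa [abs_of_nonneg hx]), max_eq_right (by linarith),
      max_eq_right (by linarith)]
    ring

lemma one_sub_cut_le {R x : ℝ} (hR : 0 < R) : 1 - cut R x ≤ |x| / R := by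
  rcases le_total |x| R with h | h
  · rw [cut_eq_one hR h]; simp; positivity
  · have : 1 ≤ |x| / R := (one_le_div hR).2 h
    linarith [cut_nonneg R x]

/-- Current value of the asset, from the history. -/
def lastv (s₀ : ℝ) {j : ℕ} (s : Fin j → ℝ) : ℝ :=
  if h : 0 < j then s ⟨j - 1, by omega⟩ else s₀

lemma continuous_lastv (s₀ : ℝ) (j : ℕ) : Continuous (lastv s₀ (j := j)) := by
  unfold lastv
  by_cases h : 0 < j
  · simp only [h, dite_true]; exact continuous_apply _
  · simp only [h, dite_false]; exact continuous_const

lemma lastv_restr (j : Fin n) (ω : Path n) (hω : ω ∈ Omega n s₀) :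
    lastv s₀ (restr j ω) = ω j.castSucc := by
  unfold lastv restr
  by_cases h : 0 < (j : ℕ)
  · simp only [h, dite_true]
    congr 1
    ext
    simp; omega
  · simp only [h, dite_false]
    rw [← hω.1]
    congr 1
    ext
    simp; omega

/-- Cutoff on path space. -/
def chi (n : ℕ) (R : ℝ) : Path n →ᵇ ℝ :=
  BoundedContinuousFunction.ofNormedAddCommGroup (fun ω => cut R ‖ω‖)
    ((continuous_cut R).comp continuous_norm) 1 fun ω => by
      rw [Real.norm_eq_abs, abs_of_nonneg (cut_nonneg _ _)]; exact cut_le_one _ _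

lemma chi_apply (R : ℝ) (ω : Path n) : chi n R ω = cut R ‖ω‖ := rfl

lemma hedge_chi (R : ℝ) (hR : 0 < R) (hs : s₀ ≤ R) (hs₀ : 0 < s₀) (c : Fin n → ℝ → ℝ) :
    Hedge s₀ c (fun ω => 1 - cut R ‖ω‖)
      (∑ i, (1 + (-(1 / R) * c i (2 * R) + 1 / R * c i R))) := by
  refine (Hedge.sum Finset.univ (fun i ω => 1 + (-(1 / R) * max (2 * R - ω i.succ) 0 +
    1 / R * max (R - ω i.succ) 0)) _ fun i _ => (Hedge.cash 1).add
      ((Hedge.put _ i _ (by positivity)).add (Hedge.put _ i _ hR.le))).mono ?_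
  intro ω hω
  have e : ∀ i : Fin n, 1 + (-(1 / R) * max (2 * R - ω i.succ) 0 +
    1 / R * max (R - ω i.succ) 0) = 1 - cut R (ω i.succ) := fun i => by
      rw [cut_eq_puts hR (hω.2 _)]; ring
  simp only [e]
  have hnn : ∀ i : Fin n, 0 ≤ 1 - cut R (ω i.succ) := fun i => by linarith [cut_le_one R (ω i.succ)]
  obtain ⟨k, hk⟩ : ∃ k, ‖ω‖ = ‖ω k‖ := by
    obtain ⟨k, -, hk⟩ := Finset.exists_max_image Finset.univ (fun k => ‖ω k‖) Finset.univ_nonempty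
    exact ⟨k, le_antisymm ((pi_norm_le_iff_of_nonneg (norm_nonneg _)).2
      fun i => hk i (Finset.mem_univ _)) (norm_le_pi_norm ω k)⟩
  rw [hk]
  clear hk
  refine Fin.cases ?_ (fun i => ?_) k
  · rw [cut_eq_one hR (by simp [hω.1, abs_of_pos hs₀, hs])]
    rw [sub_self]
    exact Finset.sum_nonneg fun i _ => hnn i
  · have : cut R ‖ω i.succ‖ = cut R (ω i.succ) := by simp [cut]
    rw [this]
    exact Finset.single_le_sum (f := fun i : Fin n => 1 - cut R (ω i.succ))
      (fun i _ => hnn i) (Finset.mem_univ i)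

lemma ae_nonneg_of_supp {ν : Measure ℝ} (h : ν (Set.Iio 0) = 0) : ∀ᵐ x ∂ν, 0 ≤ x := by
  rw [ae_iff]
  convert h using 2
  ext x; simp

lemma cost_chi (ν : Measure ℝ) [IsProbabilityMeasure ν] (h : ν (Set.Iio 0) = 0)
    (hi : Integrable (fun x => x) ν) (R : ℝ) (hR : 0 < R) :
    1 + (-(1 / R) * ∫ x, max (2 * R - x) 0 ∂ν + 1 / R * ∫ x, max (R - x) 0 ∂ν) ≤
      (∫ x, x ∂ν) / R := by
  have hp : ∀ K, Integrable (fun x => max (K - x) 0) ν := fun K =>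
    ((integrable_const K).sub hi).sup (integrable_const 0)
  have h1 : ∫ x, (1 + (-(1 / R) * max (2 * R - x) 0 + 1 / R * max (R - x) 0)) ∂ν =
    1 + (-(1 / R) * ∫ x, max (2 * R - x) 0 ∂ν + 1 / R * ∫ x, max (R - x) 0 ∂ν) := by
    have i1 : Integrable (fun x => -(1 / R) * max (2 * R - x) 0 + 1 / R * max (R - x) 0) ν :=
      ((hp _).const_mul _).add ((hp _).const_mul _)
    rw [integral_add (integrable_const _) i1,
      integral_add ((hp _).const_mul _) ((hp _).const_mul _), integral_const_mul,
      integral_const_mul]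
    simp
  rw [← h1, ← integral_div]
  refine integral_mono_ae ((integrable_const _).add
    (((hp _).const_mul _).add ((hp _).const_mul _))) (hi.div_const R) ?_
  filter_upwards [ae_nonneg_of_supp h] with x hx
  have := one_sub_cut_le (x := x) hR
  rw [cut_eq_puts hR hx, abs_of_nonneg hx] at this
  linarith

lemma represent (hs₀ : 0 < s₀) (hprob : ∀ i, IsProbabilityMeasure (μ i))
    (hsupp : ∀ i, μ i (Set.Iio 0) = 0) (hmom : ∀ i, Integrable (fun x => x) (μ i))
    (L : (Path n →ᵇ ℝ) →ₗ[ℝ] ℝ)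
    (hL : ∀ (f : Path n →ᵇ ℝ) q, Hedge s₀ (putPrice μ) f q → L f ≤ q) :
    ∃ Q ∈ MSet s₀ μ, ∀ f : Path n →ᵇ ℝ, ∫ ω, f ω ∂Q = L f := by
  have hle : ∀ (f : Path n →ᵇ ℝ) a, (∀ ω ∈ Omega n s₀, f ω ≤ a) → L f ≤ a := fun f a h =>
    hL f a ((Hedge.cash a).mono h)
  have hge : ∀ (f : Path n →ᵇ ℝ) a, (∀ ω ∈ Omega n s₀, a ≤ f ω) → a ≤ L f := fun f a h => by
    have := hle (-f) (-a) (fun ω hω => by simpa using h ω hω)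
    rw [map_neg] at this
    linarith
  obtain ⟨Q, hQp, hQ⟩ := exists_measure_of_tight L (fun f hf => hge f 0 fun ω _ => hf ω)
    (le_antisymm (hle _ _ fun _ _ => by simp) (hge _ _ fun _ _ => by simp))
    (fun k : ℕ => chi n ((k : ℝ) + 1))
    (fun k => by
      refine HasCompactSupport.intro (isCompact_closedBall (0 : Path n) (2 * ((k : ℝ) + 1))) ?_
      intro ω hω
      rw [chi_apply]
      refine cut_eq_zero (by positivity) ?_
      rw [abs_norm]
      simp only [Metric.mem_closedBall, dist_zero_right, not_le] at hω
      exact hω.le)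
    (fun k ω => cut_nonneg _ _) (fun k ω => cut_le_one _ _)
    (fun ω => by
      obtain ⟨N, hN⟩ := exists_nat_ge ‖ω‖
      refine tendsto_const_nhds.congr' ?_
      filter_upwards [eventually_ge_atTop N] with k hk
      rw [chi_apply, cut_eq_one (by positivity)]
      rw [abs_norm]
      have : (N : ℝ) ≤ k := by exact_mod_cast hk
      linarith)
    (by
      obtain ⟨N, hN⟩ := exists_nat_ge s₀
      have t : Tendsto (fun k : ℕ => (∑ i, ∫ x, x ∂(μ i)) * (1 / ((k : ℝ) + 1))) atTop (𝓝 0) := by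
        simpa using (tendsto_one_div_add_atTop_nhds_zero_nat (𝕜 := ℝ)).const_mul
          (∑ i, ∫ x, x ∂(μ i))
      refine tendsto_of_tendsto_of_tendsto_of_le_of_le' tendsto_const_nhds t ?_ ?_
      · refine Eventually.of_forall fun k => hge _ _ fun ω _ => ?_
        have := cut_le_one ((k : ℝ) + 1) ‖ω‖
        simpa [chi_apply] using this
      · filter_upwards [eventually_ge_atTop N] with k hk
        have hk' : (N : ℝ) ≤ k := by exact_mod_cast hk
        have hk0 : (0 : ℝ) < (k : ℝ) + 1 := by positivity
        refine (hL _ _ (hedge_chi ((k : ℝ) + 1) hk0 (by linarith) hs₀ (putPrice μ))).trans ?_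
        rw [Finset.sum_mul]
        refine Finset.sum_le_sum fun i _ => ?_
        have := hprob i
        refine (cost_chi (μ i) (hsupp i) (hmom i) _ hk0).trans (le_of_eq (by ring)))
  -- support
  have hsup : ∀ᵐ ω ∂Q, ω ∈ Omega n s₀ := by
    let d : Path n →ᵇ ℝ := BoundedContinuousFunction.ofNormedAddCommGroup
      (fun ω => min 1 (Metric.infDist ω (Omega n s₀)))
      (continuous_const.min (Metric.continuous_infDist_pt _)) 1 (fun ω => by
        rw [Real.norm_eq_abs, abs_of_nonneg (le_min zero_le_one Metric.infDist_nonneg)]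
        exact min_le_left _ _)
    have hd : ∀ ω, d ω = min 1 (Metric.infDist ω (Omega n s₀)) := fun _ => rfl
    have hd0 : ∀ ω, 0 ≤ d ω := fun ω => le_min zero_le_one Metric.infDist_nonneg
    have h0 : ∫ ω, d ω ∂Q = 0 := by
      rw [hQ]
      exact le_antisymm (hle _ _ fun ω hω => by
        rw [hd, Metric.infDist_zero_of_mem hω]; simp) (hge _ _ fun ω _ => hd0 ω)
    rw [integral_eq_zero_iff_of_nonneg hd0 (d.integrable Q)] at h0
    have hne : (Omega n s₀).Nonempty := ⟨fun _ => s₀, rfl, fun _ => hs₀.le⟩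
    filter_upwards [h0] with ω hω
    rw [(isClosed_Omega s₀).mem_iff_infDist_zero hne]
    rw [hd, Pi.zero_apply] at hω
    rcases min_choice 1 (Metric.infDist ω (Omega n s₀)) with h | h <;> rw [h] at hω
    · norm_num at hω
    · exact hω
  -- marginals
  have hmarg : ∀ i : Fin n, Q.map (fun ω => ω i.succ) = μ i := by
    intro i
    have := hprob i
    have : IsProbabilityMeasure (Q.map (fun ω : Path n => ω i.succ)) :=
      Measure.isProbabilityMeasure_map (meas_coord _).aemeasurable
    refine eq_of_puts _ _ ?_ (hsupp i) fun K hK => ?_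
    · rw [Measure.map_apply (meas_coord _) measurableSet_Iio]
      refine measure_mono_null ?_ (ae_iff.1 hsup)
      intro ω hω h
      exact absurd (h.2 i.succ) (not_le.2 hω)
    · have hc : Continuous fun x : ℝ => max (K - max x 0) 0 := by fun_prop
      rw [integral_map (meas_coord _).aemeasurable hc.measurable.aestronglyMeasurable]
      let g : Path n →ᵇ ℝ := BoundedContinuousFunction.ofNormedAddCommGroup
        (fun ω => max (K - max (ω i.succ) 0) 0) (hc.comp (continuous_apply _)) K (fun ω => by
          rw [Real.norm_eq_abs, abs_of_nonneg (le_max_right _ _)]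
          exact max_le (by linarith [le_max_right (ω i.succ) 0]) hK)
      have hg : ∀ ω ∈ Omega n s₀, g ω = max (K - ω i.succ) 0 := by
        intro ω hω
        change max (K - max (ω i.succ) 0) 0 = _
        rw [max_eq_left (hω.2 i.succ)]
      have h1 : L g = putPrice μ i K := by
        refine le_antisymm ?_ ?_
        · have := hL g (1 * putPrice μ i K)
            ((Hedge.put 1 i K hK).mono fun ω hω => by rw [hg ω hω, one_mul])
          linarith
        · have := hL (-g) (-1 * putPrice μ i K)
            ((Hedge.put (-1) i K hK).mono fun ω hω => by
              rw [BoundedContinuousFunction.neg_apply, hg ω hω]; linarith)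
          rw [map_neg] at this
          linarith
      refine (hQ g).trans (h1.trans ?_)
      refine integral_congr_ae ?_
      filter_upwards [ae_nonneg_of_supp (hsupp i)] with x hx
      rw [max_eq_left hx]
  have hPi : Q ∈ PiMu s₀ μ :=
    ⟨hQp, (prob_compl_eq_zero_iff (isClosed_Omega s₀).measurableSet).1 (ae_iff.1 hsup), hmarg⟩
  refine ⟨Q, ⟨hPi, ?_⟩, hQ⟩
  intro j A hA
  refine indicator_of_cont Q (restr j) (measurable_restr j) (fun ω => ω j.succ)
    (fun ω => ω j.castSucc) (meas_coord _) (meas_coord _) (PiMu.integrable hPi hmom _)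
    (PiMu.integrable hPi hmom _) (by filter_upwards [hsup] with ω hω using hω.2 _)
    (by filter_upwards [hsup] with ω hω using hω.2 _) ?_ A hA
  intro φ hφ hφ0 hφ1
  let F : ℕ → Path n → ℝ := fun k ω => φ (restr j ω) * (cut ((k : ℝ) + 1) (ω j.castSucc) *
    (min (max (ω j.succ) 0) ((k : ℝ) + 1) - ω j.castSucc))
  have hFc : ∀ k, Continuous (F k) := by
    intro k
    exact (hφ.comp (continuous_restr j)).mul
      (((continuous_cut _).comp (continuous_apply _)).mul
        ((((continuous_apply _).max continuous_const).min continuous_const).sub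
          (continuous_apply _)))
  have habs : ∀ ω, |φ (restr j ω)| ≤ 1 := fun ω => by
    rw [abs_of_nonneg (hφ0 _)]; exact hφ1 _
  have hFb : ∀ k ω, ‖F k ω‖ ≤ 3 * ((k : ℝ) + 1) := by
    intro k ω
    have hk0 : (0 : ℝ) < (k : ℝ) + 1 := by positivity
    have c0 := cut_nonneg ((k : ℝ) + 1) (ω j.castSucc)
    have c1 := cut_le_one ((k : ℝ) + 1) (ω j.castSucc)
    have c2 := cut_mul_abs hk0 (ω j.castSucc)
    have m0 : 0 ≤ min (max (ω j.succ) 0) ((k : ℝ) + 1) := le_min (le_max_right _ _) hk0.le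
    have m1 : min (max (ω j.succ) 0) ((k : ℝ) + 1) ≤ (k : ℝ) + 1 := min_le_right _ _
    have h1 : |cut ((k : ℝ) + 1) (ω j.castSucc) *
        (min (max (ω j.succ) 0) ((k : ℝ) + 1) - ω j.castSucc)| ≤ 3 * ((k : ℝ) + 1) := by
      rw [abs_mul, abs_of_nonneg c0]
      have h2 : |min (max (ω j.succ) 0) ((k : ℝ) + 1) - ω j.castSucc| ≤
          ((k : ℝ) + 1) + |ω j.castSucc| :=
        (abs_sub _ _).trans (by rw [abs_of_nonneg m0]; linarith)
      have h3 := mul_le_mul_of_nonneg_left h2 c0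
      nlinarith
    simp only [F]
    rw [Real.norm_eq_abs, abs_mul]
    calc _ ≤ 1 * (3 * ((k : ℝ) + 1)) :=
          mul_le_mul (habs ω) h1 (abs_nonneg _) zero_le_one
      _ = _ := one_mul _
  have hF0 : ∀ k, ∫ ω, F k ω ∂Q ≤ 0 := by
    intro k
    let g : Path n →ᵇ ℝ :=
      BoundedContinuousFunction.ofNormedAddCommGroup (F k) (hFc k) _ (hFb k)
    refine (hQ g).le.trans (hL g 0 ?_)
    have hb : ∀ x : Fin j → ℝ, |φ x * cut ((k : ℝ) + 1) (lastv s₀ x)| ≤ 1 := fun x => by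
      rw [abs_of_nonneg (mul_nonneg (hφ0 _) (cut_nonneg _ _))]
      exact mul_le_one₀ (hφ1 _) (cut_nonneg _ _) (cut_le_one _ _)
    have hm : Measurable (fun x : Fin j → ℝ => φ x * cut ((k : ℝ) + 1) (lastv s₀ x)) :=
      (hφ.mul ((continuous_cut _).comp (continuous_lastv s₀ j))).measurable
    refine (Hedge.dyn (Dyn.single j _ hm 1 hb) ?_).mono ?_
    · intro i x
      by_cases h : i = j
      · subst h
        simpa [Dyn.single] using mul_nonneg (hφ0 _) (cut_nonneg _ _)
      · simp [Dyn.single, h]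
    · intro ω hω
      rw [Dyn.single_gains, lastv_restr j ω hω, mul_assoc]
      change φ (restr j ω) * (cut ((k : ℝ) + 1) (ω j.castSucc) *
        (min (max (ω j.succ) 0) ((k : ℝ) + 1) - ω j.castSucc)) ≤ _
      refine mul_le_mul_of_nonneg_left (mul_le_mul_of_nonneg_left ?_ (cut_nonneg _ _)) (hφ0 _)
      have := min_le_left (max (ω j.succ) 0) ((k : ℝ) + 1)
      rw [max_eq_left (hω.2 j.succ)] at this ⊢
      linarith
  have hlim : Tendsto (fun k => ∫ ω, F k ω ∂Q) atTop
      (𝓝 (∫ ω, φ (restr j ω) * (ω j.succ - ω j.castSucc) ∂Q)) := by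
    refine tendsto_integral_of_dominated_convergence (fun ω => |ω j.succ| + |ω j.castSucc|)
      (fun k => (hFc k).measurable.aestronglyMeasurable)
      ((PiMu.integrable hPi hmom _).abs.add (PiMu.integrable hPi hmom _).abs) ?_ ?_
    · intro k
      filter_upwards [hsup] with ω hω
      have hk0 : (0 : ℝ) < (k : ℝ) + 1 := by positivity
      simp only [F]
      rw [max_eq_left (hω.2 j.succ), Real.norm_eq_abs, abs_mul, abs_mul,
        abs_of_nonneg (cut_nonneg _ _)]
      have h2 : |min (ω j.succ) ((k : ℝ) + 1) - ω j.castSucc| ≤ |ω j.succ| + |ω j.castSucc| := by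
        refine (abs_sub _ _).trans (add_le_add ?_ le_rfl)
        rw [abs_of_nonneg (le_min (hω.2 _) hk0.le)]
        exact (min_le_left _ _).trans (le_abs_self _)
      calc _ ≤ 1 * (1 * (|ω j.succ| + |ω j.castSucc|)) := by
            refine mul_le_mul (habs ω) (mul_le_mul (cut_le_one _ _) h2 (abs_nonneg _)
              zero_le_one) (mul_nonneg (cut_nonneg _ _) (abs_nonneg _)) zero_le_one
        _ = _ := by ring
    · filter_upwards [hsup] with ω hω
      obtain ⟨N, hN⟩ := exists_nat_ge (max (ω j.succ) (ω j.castSucc))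
      refine tendsto_const_nhds.congr' ?_
      filter_upwards [eventually_ge_atTop N] with k hk
      have hk' : (N : ℝ) ≤ k := by exact_mod_cast hk
      have h1 := (le_max_left _ _).trans hN
      have h2 := (le_max_right _ _).trans hN
      simp only [F]
      rw [max_eq_left (hω.2 j.succ), min_eq_left (by linarith), cut_eq_one (by positivity)
        (by rw [abs_of_nonneg (hω.2 _)]; linarith), one_mul]
  exact le_of_tendsto' hlim hF0

/-- Duality for bounded continuous claims. -/
lemma bounded_duality (hs₀ : 0 < s₀) (hprob : ∀ i, IsProbabilityMeasure (μ i))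
    (hsupp : ∀ i, μ i (Set.Iio 0) = 0) (hmom : ∀ i, Integrable (fun x => x) (μ i))
    (hne : (MSet s₀ μ).Nonempty) (G : Path n →ᵇ ℝ) :
    ∃ Q ∈ MSet s₀ μ, ∀ ε > 0, ∃ q, q < ∫ ω, G ω ∂Q + ε ∧ Hedge s₀ (putPrice μ) G q := by
  obtain ⟨Q₀, hQ₀⟩ := hne
  by_cases hG : G = 0
  · refine ⟨Q₀, hQ₀, fun ε hε => ⟨0, ?_, (Hedge.cash 0).mono fun ω _ => by simp [hG]⟩⟩
    simp [hG, hε]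
  have := hQ₀.1.1
  obtain ⟨L, h1, h2⟩ := exists_functional (s₀ := s₀) (putPrice μ) G hG (fun f =>
    ⟨∫ ω, f ω ∂Q₀, fun q hq => by
      obtain ⟨X, D, hD, rfl, h⟩ := hq
      exact MSet.le_price hQ₀ hmom X D (fun j x _ => hD j x) f (f.integrable Q₀) h⟩)
  obtain ⟨Q, hQ, hrep⟩ := represent hs₀ hprob hsupp hmom L h1
  refine ⟨Q, hQ, fun ε hε => ?_⟩
  rw [hrep]
  exact h2 ε hε

end Representation

section Asian

open BoundedContinuousFunction

variable {n : ℕ} {s₀ : ℝ}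

lemma mkPath_mem (hs₀ : 0 < s₀) (i : Fin n) (s : Fin i → ℝ) (hs : ∀ k, 0 ≤ s k) (x : ℝ)
    (hx : 0 ≤ x) (t : Fin (n - ((i : ℕ) + 1)) → ℝ) (ht : ∀ k, 0 ≤ t k) :
    mkPath s₀ i s x t ∈ Omega n s₀ := by
  refine ⟨by simp [mkPath], fun k => ?_⟩
  unfold mkPath
  split_ifs
  · exact hs₀.le
  · exact hs _
  · exact hx
  · exact ht _

lemma mkPath_succ (i : Fin n) (s : Fin i → ℝ) (x : ℝ) (t : Fin (n - ((i : ℕ) + 1)) → ℝ)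
    (k : Fin n) :
    mkPath s₀ i s x t k.succ = mkPath s₀ i s 0 t k.succ + if k = i then x else 0 := by
  unfold mkPath
  by_cases h : k = i
  · subst h; simp
  · have h' : (k : ℕ) ≠ i := fun e => h (Fin.ext e)
    simp [h, h']

lemma mkPath_of_le (i : Fin n) (s : Fin i → ℝ) (x : ℝ) (t : Fin (n - ((i : ℕ) + 1)) → ℝ)
    (k : Fin (n + 1)) (hk : (k : ℕ) ≤ i) :
    mkPath s₀ i s x t k = mkPath s₀ i s 0 t k := by
  unfold mkPath
  by_cases h : (k : ℕ) = 0
  · simp [h]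
  · simp [h, hk]

lemma restr_mkPath_of_le (i : Fin n) (s : Fin i → ℝ) (x : ℝ)
    (t : Fin (n - ((i : ℕ) + 1)) → ℝ) (j : Fin n) (hj : (j : ℕ) ≤ i) :
    restr j (mkPath s₀ i s x t) = restr j (mkPath s₀ i s 0 t) := by
  funext k
  refine mkPath_of_le i s x t _ ?_
  have := k.isLt
  simp only
  omega

lemma restr_mkPath (i : Fin n) (s : Fin i → ℝ) (x : ℝ) (t : Fin (n - ((i : ℕ) + 1)) → ℝ) :
    restr i (mkPath s₀ i s x t) = s := by
  funext k
  have := k.isLt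
  simp [restr, mkPath, Nat.succ_le_of_lt this]

lemma sum_mkPath (i : Fin n) (s : Fin i → ℝ) (x : ℝ) (t : Fin (n - ((i : ℕ) + 1)) → ℝ) :
    ∑ k, tailCoords (mkPath s₀ i s x t) k = ∑ k, tailCoords (mkPath s₀ i s 0 t) k + x := by
  simp only [tailCoords]
  rw [Finset.sum_congr rfl fun k _ => mkPath_succ i s x t k, Finset.sum_add_distrib]
  simp

lemma tendsto_asian (hn : 1 ≤ n) (c K : ℝ) :
    Tendsto (fun x : ℝ => max ((c + x) / n - K) 0 * x⁻¹) atTop (𝓝 (1 / n)) := by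
  have hn0 : (0 : ℝ) < n := by exact_mod_cast hn
  have h : Tendsto (fun x : ℝ => (c / n - K) * x⁻¹ + 1 / n) atTop (𝓝 (1 / n)) := by
    simpa using (tendsto_inv_atTop_zero.const_mul (c / n - K)).add_const (1 / (n : ℝ))
  refine h.congr' ?_
  filter_upwards [eventually_gt_atTop 0, eventually_ge_atTop (n * K - c)] with x h1 h2
  rw [max_eq_left]
  · field_simp
    ring
  · rw [sub_nonneg, le_div_iff₀ hn0]; linarith

lemma slope_le {a b c d : ℝ} (h : ∀ x, 0 ≤ x → a + b * x ≤ c + d * x) : b ≤ d := by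
  by_contra! hlt
  have hp : 0 < b - d := sub_pos.2 hlt
  have := h ((|c - a| + 1) / (b - d)) (by positivity)
  have e : (b - d) * ((|c - a| + 1) / (b - d)) = |c - a| + 1 := by field_simp
  have := le_abs_self (c - a)
  nlinarith

lemma beta_eq (hn : 1 ≤ n) (hs₀ : 0 < s₀) (K : ℝ)
    (β : (i : Fin (n + 1)) → (Fin i → ℝ) → ℝ)
    (hβ : IsBetaFamily s₀ (Omega n s₀)
        (fun s => ((max ((∑ i, s i) / n - K) 0 : ℝ) : EReal)) β) :
    ∀ (m i : ℕ) (hi : i < n + 1), i + m = n → ∀ s : Fin i → ℝ, (∀ k, 0 ≤ s k) →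
      β ⟨i, hi⟩ s = ((n : ℝ) - i) / n := by
  have hn0 : (0 : ℝ) < n := by exact_mod_cast hn
  intro m
  induction m with
  | zero =>
    intro i hi h s _
    have h : i = n := by omega
    subst h
    rw [sub_self, zero_div]
    exact hβ.1 s
  | succ m ih =>
    intro i hi h s hs
    have hin : i < n := by omega
    have key := hβ.2 ⟨i, hin⟩ s hs
    have hlim : ∀ t : Fin (n - (i + 1)) → ℝ, (∀ k, 0 ≤ t k) →
        Filter.limsup (fun x : ℝ =>
          if mkPath s₀ (⟨i, hin⟩ : Fin n) s x t ∈ Omega n s₀ then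
            ((β ⟨i + 1, by omega⟩ (Fin.snoc s x) : ℝ) : EReal)
              + ((max ((∑ k, tailCoords (mkPath s₀ (⟨i, hin⟩ : Fin n) s x t) k) / n - K) 0 : ℝ)
                : EReal) * ((x⁻¹ : ℝ) : EReal)
          else 0) Filter.atTop = (((n : ℝ) - i) / n : ℝ) := by
      intro t ht
      refine Tendsto.limsup_eq ?_
      have hc : ((n : ℝ) - i) / n = ((n : ℝ) - (i + 1)) / n + 1 / n := by field_simp; ring
      have h1 := (tendsto_asian hn
        (∑ k, tailCoords (mkPath s₀ (⟨i, hin⟩ : Fin n) s 0 t) k) K).const_add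
          (((n : ℝ) - (i + 1)) / n)
      rw [← hc] at h1
      refine ((continuous_coe_real_ereal.tendsto _).comp h1).congr' ?_
      filter_upwards [eventually_ge_atTop 0] with x hx
      rw [if_pos (mkPath_mem hs₀ (⟨i, hin⟩ : Fin n) s hs x hx t ht), sum_mkPath (⟨i, hin⟩ : Fin n) s x t,
        ih (i + 1) (by omega) (by omega) (Fin.snoc s x) ?_]
      · simp only [Function.comp]
        push_cast
        rfl
      · intro k
        refine Fin.lastCases ?_ (fun k => ?_) k
        · simpa using hx
        · simpa using hs k
    have hpos : (0 : ℝ) ≤ ((n : ℝ) - i) / n := by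
      have : (i : ℝ) < n := by exact_mod_cast hin
      exact div_nonneg (by linarith) hn0.le
    have hsup : (⨆ (t : Fin (n - (i + 1)) → ℝ) (_ : ∀ k, 0 ≤ t k),
        Filter.limsup (fun x : ℝ =>
          if mkPath s₀ (⟨i, hin⟩ : Fin n) s x t ∈ Omega n s₀ then
            ((β ⟨i + 1, by omega⟩ (Fin.snoc s x) : ℝ) : EReal)
              + ((max ((∑ k, tailCoords (mkPath s₀ (⟨i, hin⟩ : Fin n) s x t) k) / n - K) 0 : ℝ)
                : EReal) * ((x⁻¹ : ℝ) : EReal)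
          else 0) Filter.atTop) = (((n : ℝ) - i) / n : ℝ) := by
      refine le_antisymm (iSup₂_le fun t ht => (hlim t ht).le) ?_
      refine le_trans (hlim (fun _ => 0) fun _ => le_rfl).ge
        (le_iSup₂_of_le (fun _ => 0) (fun _ => le_rfl) le_rfl)
    have key2 := key.trans (congrArg (fun z => max 0 z) hsup)
    have hm : max (0 : EReal) (((n : ℝ) - i) / n : ℝ) = (((n : ℝ) - i) / n : ℝ) :=
      max_eq_right (by exact_mod_cast hpos)
    exact EReal.coe_injective (key2.trans hm)

lemma putPayoff_le (X : Static n) (ω : Path n) (hω : ω ∈ Omega n s₀) :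
    X.putPayoff ω ≤ X.const + ∑ k, |X.coeff k| * X.strike k := by
  unfold Static.putPayoff
  refine add_le_add le_rfl (Finset.sum_le_sum fun k _ => ?_)
  have h1 : max (X.strike k - ω (X.idx k).succ) 0 ≤ X.strike k :=
    max_le (by linarith [hω.2 (X.idx k).succ]) (X.strike_nonneg k)
  calc _ ≤ |X.coeff k| * max (X.strike k - ω (X.idx k).succ) 0 :=
        mul_le_mul_of_nonneg_right (le_abs_self _) (le_max_right _ _)
    _ ≤ _ := mul_le_mul_of_nonneg_left h1 (abs_nonneg _)

lemma pos_ge (hn : 1 ≤ n) (hs₀ : 0 < s₀) (K : ℝ) (X : Static n) (D : Dyn n)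
    (h : ∀ ω ∈ Omega n s₀, max ((∑ i, tailCoords ω i) / n - K) 0 ≤ X.putPayoff ω + D.gains ω) :
    ∀ (m : ℕ) (i : Fin n), (i : ℕ) + m = n → ∀ s : Fin i → ℝ, (∀ k, 0 ≤ s k) →
      ((n : ℝ) - (i : ℕ)) / n ≤ D.pos i s := by
  have hn0 : (0 : ℝ) < n := by exact_mod_cast hn
  intro m
  induction m with
  | zero => intro i hi; have := i.isLt; omega
  | succ m ih =>
    intro i hi s hs
    let p : ℝ → Path n := fun x => mkPath s₀ i s x (fun _ => 0)
    have hp : ∀ x, 0 ≤ x → p x ∈ Omega n s₀ := fun x hx =>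
      mkPath_mem hs₀ i s hs x hx _ fun _ => le_rfl
    let b : ℝ := ((n : ℝ) - ((i : ℕ) + 1)) / n
    have hgain : ∀ x, 0 ≤ x → D.gains (p x) ≤ D.gains (p 0) + (D.pos i s - b) * x := by
      intro x hx
      have ht : ∀ j : Fin n, D.pos j (restr j (p x)) * (p x j.succ - p x j.castSucc) ≤
          D.pos j (restr j (p 0)) * (p 0 j.succ - p 0 j.castSucc) +
            ((if j = i then D.pos i s * x else 0) +
              if (j : ℕ) = (i : ℕ) + 1 then -(b * x) else 0) := by
        intro j
        rcases lt_trichotomy (j : ℕ) (i : ℕ) with hj | hj | hj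
        · have e1 : j ≠ i := fun e => by simp [e] at hj
          rw [if_neg e1, if_neg (by omega)]
          simp only [p]
          rw [restr_mkPath_of_le i s x _ j hj.le,
            mkPath_of_le i s x _ j.succ (by simp; omega),
            mkPath_of_le i s x _ j.castSucc (by simp; omega)]
          simp
        · have e1 : j = i := Fin.ext hj
          subst e1
          rw [if_pos rfl, if_neg (by omega)]
          simp only [p]
          rw [restr_mkPath, restr_mkPath, mkPath_succ j s x _ j,
            mkPath_of_le j s x _ j.castSucc (by simp), if_pos rfl]
          exact le_of_eq (by ring)
        · have e1 : j ≠ i := fun e => by simp [e] at hj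
          rw [if_neg e1]
          have z : ∀ y, p y j.succ = 0 := by
            intro y
            have a1 : ¬ ((j : ℕ) + 1 ≤ i) := by omega
            have a2 : (j : ℕ) ≠ i := by omega
            simp [p, mkPath, a1, a2]
          by_cases hj2 : (j : ℕ) = (i : ℕ) + 1
          · have z2 : ∀ y, p y j.castSucc = y := by
              intro y
              simp [p, mkPath, hj2]
            have hb : b ≤ D.pos j (restr j (p x)) := by
              have := ih j (by omega) (restr j (p x)) fun k => (hp x hx).2 _
              rw [hj2] at this
              push_cast at this
              exact this
            rw [if_pos hj2, z, z, z2, z2]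
            nlinarith
          · have z2 : ∀ y, p y j.castSucc = 0 := by
              intro y
              have a1 : ¬ ((j : ℕ) ≤ i) := by omega
              have a0 : (j : ℕ) ≠ 0 := by omega
              simp [p, mkPath, a0, a1, hj2]
            rw [if_neg hj2, z, z, z2, z2]
            simp
      have hsum := Finset.sum_le_sum fun j (_ : j ∈ Finset.univ) => ht j
      rw [Finset.sum_add_distrib, Finset.sum_add_distrib] at hsum
      have s1 : ∑ j : Fin n, (if j = i then D.pos i s * x else 0) = D.pos i s * x := by simp
      have s2 : ∑ j : Fin n, (if (j : ℕ) = (i : ℕ) + 1 then -(b * x) else 0) = -(b * x) := by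
        by_cases hin : (i : ℕ) + 1 < n
        · rw [Finset.sum_eq_single (⟨(i : ℕ) + 1, hin⟩ : Fin n)]
          · simp
          · intro j _ hj
            rw [if_neg fun e => hj (Fin.ext e)]
          · simp
        · have e : (n : ℝ) = (i : ℕ) + 1 := by
            have := i.isLt
            have : n = (i : ℕ) + 1 := by omega
            exact_mod_cast this
          have : b = 0 := by simp only [b]; rw [e]; simp
          simp [this]
      rw [s1, s2] at hsum
      have e : D.gains (p x) = ∑ j, D.pos j (restr j (p x)) * (p x j.succ - p x j.castSucc) := rfl
      have e0 : D.gains (p 0) = ∑ j, D.pos j (restr j (p 0)) * (p 0 j.succ - p 0 j.castSucc) := rfl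
      rw [e, e0]
      linarith
    have hslope : 1 / (n : ℝ) ≤ D.pos i s - b := by
      refine slope_le (a := (∑ k, tailCoords (p 0) k) / n - K)
        (c := X.const + ∑ k, |X.coeff k| * X.strike k + D.gains (p 0)) fun x hx => ?_
      have h1 := (le_max_left _ _).trans (h (p x) (hp x hx))
      have h2 := putPayoff_le X (p x) (hp x hx)
      have h3 := hgain x hx
      have h4 : ∑ k, tailCoords (p x) k = ∑ k, tailCoords (p 0) k + x := sum_mkPath i s x _
      rw [h4, add_div] at h1
      have h5 : 1 / (n : ℝ) * x = x / n := by ring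
      linarith
    have hb : b = ((n : ℝ) - (i : ℕ)) / n - 1 / n := by simp only [b]; ring
    linarith

/-- The strategy `β`. -/
def betaDyn (n : ℕ) : Dyn n := Dyn.ofConst fun j => ((n : ℝ) - (j : ℕ)) / n

lemma abel_aux (f : ℕ → ℝ) (n : ℕ) : ∀ c : ℝ,
    ∑ j ∈ Finset.range n, (c + n - j) * (f (j + 1) - f j) =
      ∑ j ∈ Finset.range n, f (j + 1) + c * f n - (c + n) * f 0 := by
  induction n with
  | zero => intro c; simp
  | succ n ih =>
    intro c
    rw [Finset.sum_range_succ, Finset.sum_range_succ]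
    have := ih (c + 1)
    have e : ∑ j ∈ Finset.range n, (c + ((n + 1 : ℕ) : ℝ) - j) * (f (j + 1) - f j) =
        ∑ j ∈ Finset.range n, (c + 1 + n - j) * (f (j + 1) - f j) :=
      Finset.sum_congr rfl fun j _ => by push_cast; ring
    rw [e, this]
    push_cast
    ring

lemma betaDyn_gains (hn : 1 ≤ n) (ω : Path n) (hω : ω ∈ Omega n s₀) :
    (betaDyn n).gains ω = (∑ i, tailCoords ω i) / n - s₀ := by
  have hn0 : (n : ℝ) ≠ 0 := by
    have : n ≠ 0 := by omega
    exact_mod_cast this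
  let f : ℕ → ℝ := fun k => if h : k < n + 1 then ω ⟨k, h⟩ else 0
  have hf : ∀ k : Fin (n + 1), ω k = f k := fun k => by
    simp only [f]; rw [dif_pos k.isLt]
  have h1 := abel_aux f n 0
  rw [Finset.sum_range, Finset.sum_range] at h1
  have h2 : (betaDyn n).gains ω =
      (∑ j : Fin n, (0 + (n : ℝ) - (j : ℕ)) * (f ((j : ℕ) + 1) - f (j : ℕ))) / n := by
    rw [Finset.sum_div]
    refine Finset.sum_congr rfl fun j _ => ?_
    rw [hf, hf]
    simp only [betaDyn, Dyn.ofConst, Fin.val_succ, Fin.val_castSucc]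
    ring
  have h3 : ∑ i, tailCoords ω i = ∑ j : Fin n, f ((j : ℕ) + 1) :=
    Finset.sum_congr rfl fun j _ => by simp only [tailCoords]; rw [hf]; rfl
  have h4 : f 0 = s₀ := by rw [← hω.1, hf]; rfl
  rw [h2, h1, h3, h4]
  field_simp
  ring

lemma betaDyn_nonneg (hn : 1 ≤ n) : (betaDyn n).Nonneg := by
  intro j x
  have : ((j : ℕ) : ℝ) < n := by exact_mod_cast j.isLt
  exact div_nonneg (by linarith) (by positivity)

variable {μ : Fin n → Measure ℝ} {Q : Measure (Path n)}

lemma integrable_avg (hQ : Q ∈ MSet s₀ μ) (hmom : ∀ i, Integrable (fun x => x) (μ i)) :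
    Integrable (fun ω : Path n => (∑ i, tailCoords ω i) / n) Q :=
  (integrable_finsetSum _ fun i _ => PiMu.integrable hQ.1 hmom (Fin.succ i)).div_const _

lemma integrable_asian (hQ : Q ∈ MSet s₀ μ) (hmom : ∀ i, Integrable (fun x => x) (μ i)) (K : ℝ) :
    Integrable (fun ω : Path n => max ((∑ i, tailCoords ω i) / n - K) 0) Q := by
  have := hQ.1.1
  exact ((integrable_avg hQ hmom).sub (integrable_const K)).sup (integrable_const 0)

lemma integral_avg (hn : 1 ≤ n) (hQ : Q ∈ MSet s₀ μ)
    (hmom : ∀ i, Integrable (fun x => x) (μ i)) :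
    ∫ ω : Path n, (s₀ - (∑ i, tailCoords ω i) / n) ∂Q =
      (1 / n : ℝ) * ∑ i : Fin n, (s₀ - ∫ x, x ∂(μ i)) := by
  have hn0 : (n : ℝ) ≠ 0 := by
    have : n ≠ 0 := by omega
    exact_mod_cast this
  have := hQ.1.1
  rw [integral_sub (integrable_const _) (integrable_avg hQ hmom), integral_div]
  have : ∫ ω : Path n, ∑ i, tailCoords ω i ∂Q = ∑ i, ∫ x, x ∂(μ i) := by
    simp only [tailCoords]
    rw [integral_finsetSum _ fun i _ => PiMu.integrable hQ.1 hmom (Fin.succ i)]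
    exact Finset.sum_congr rfl fun i _ => PiMu.integral_comp hQ.1 i (fun x => x) measurable_id
  rw [this, Finset.sum_sub_distrib]
  simp
  field_simp

lemma eexpE_asian (hQ : Q ∈ MSet s₀ μ) (hmom : ∀ i, Integrable (fun x => x) (μ i)) (K : ℝ) :
    eexpE Q (fun ω : Path n => ((max ((∑ i, tailCoords ω i) / n - K) 0 : ℝ) : EReal)) =
      ((∫ ω : Path n, max ((∑ i, tailCoords ω i) / n - K) 0 ∂Q : ℝ) : EReal) := by
  have hi := integrable_asian hQ hmom K
  have h0 : ∀ ω : Path n, 0 ≤ max ((∑ i, tailCoords ω i) / n - K) 0 := fun _ => le_max_right _ _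
  have p1 : ∀ r : ℝ, posE (r : EReal) = ENNReal.ofReal r := fun r => by
    simp [posE]
  have p2 : ∀ r : ℝ, 0 ≤ r → posE (-(r : EReal)) = 0 := fun r hr => by
    rw [← EReal.coe_neg, p1]
    exact ENNReal.ofReal_of_nonpos (by linarith)
  unfold eexpE
  simp only [p1, p2 _ (h0 _)]
  rw [← ofReal_integral_eq_lintegral_ofReal hi (Eventually.of_forall h0)]
  simp only [lintegral_zero, EReal.coe_ennreal_zero, sub_zero]
  rw [EReal.coe_ennreal_ofReal, max_eq_left (integral_nonneg h0)]

lemma asian_lower (hn : 1 ≤ n) (hs₀ : 0 < s₀) (K : ℝ)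
    (hmom : ∀ i, Integrable (fun x => x) (μ i)) (hQ : Q ∈ MSet s₀ μ) (X : Static n) (D : Dyn n)
    (h : ∀ ω ∈ Omega n s₀, max ((∑ i, tailCoords ω i) / n - K) 0 ≤ X.putPayoff ω + D.gains ω) :
    ∫ ω : Path n, max ((∑ i, tailCoords ω i) / n - K) 0 ∂Q +
      (1 / n : ℝ) * ∑ i : Fin n, (s₀ - ∫ x, x ∂(μ i)) ≤ X.price (putPrice μ) := by
  have := hQ.1.1
  have i1 := integrable_asian hQ hmom K
  have i2 : Integrable (fun ω : Path n => s₀ - (∑ i, tailCoords ω i) / n) Q :=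
    (integrable_const _).sub (integrable_avg hQ hmom)
  rw [← integral_avg hn hQ hmom, ← integral_add i1 i2]
  refine MSet.le_price hQ hmom X (D.add ((betaDyn n).smul (-1))) ?_ _ (i1.add i2) ?_
  · intro j x hx
    have := pos_ge hn hs₀ K X D h (n - j) j (by have := j.isLt; omega) x hx
    change 0 ≤ D.pos j x + (-1) * (((n : ℝ) - (j : ℕ)) / n)
    linarith
  · intro ω hω
    rw [Dyn.add_gains, Dyn.smul_gains, betaDyn_gains hn ω hω]
    linarith [h ω hω]

/-- The bounded claim left after subtracting the gains of `β`. -/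
def asianBdd (n : ℕ) (s₀ K : ℝ) (hK : 0 ≤ K) : Path n →ᵇ ℝ :=
  BoundedContinuousFunction.ofNormedAddCommGroup
    (fun ω => s₀ - min ((∑ i : Fin n, max (ω i.succ) 0) / n) K)
    (continuous_const.sub (((continuous_finsetSum _ fun i _ =>
      (continuous_apply (Fin.succ i)).max continuous_const).div_const _).min continuous_const))
    (|s₀| + K) (fun ω => by
      have h0 : 0 ≤ min ((∑ i : Fin n, max (ω i.succ) 0) / n) K :=
        le_min (div_nonneg (Finset.sum_nonneg fun i _ => le_max_right _ _) (by positivity)) hK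
      rw [Real.norm_eq_abs]
      refine (abs_sub _ _).trans ?_
      rw [abs_of_nonneg h0]
      gcongr
      exact min_le_right _ _)

lemma asianBdd_eq (s₀ K : ℝ) (hK : 0 ≤ K) (ω : Path n) (hω : ω ∈ Omega n s₀) :
    asianBdd n s₀ K hK ω =
      max ((∑ i, tailCoords ω i) / n - K) 0 + (s₀ - (∑ i, tailCoords ω i) / n) := by
  change s₀ - min ((∑ i : Fin n, max (ω i.succ) 0) / n) K = _
  have e : ∑ i : Fin n, max (ω i.succ) 0 = ∑ i, tailCoords ω i :=
    Finset.sum_congr rfl fun i _ => max_eq_left (hω.2 _)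
  rw [e]
  rcases le_total ((∑ i, tailCoords ω i) / n) K with h | h
  · rw [min_eq_left h, max_eq_right (by linarith)]; ring
  · rw [min_eq_right h, max_eq_left (by linarith)]; ring

lemma asian_upper (hn : 1 ≤ n) (hs₀ : 0 < s₀) (K : ℝ) (hK : 0 ≤ K)
    (hprob : ∀ i, IsProbabilityMeasure (μ i))
    (hsupp : ∀ i, μ i (Set.Iio 0) = 0) (hmom : ∀ i, Integrable (fun x => x) (μ i))
    (hne : (MSet s₀ μ).Nonempty) :
    ∃ Q ∈ MSet s₀ μ, ∀ ε > 0, ∃ q,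
      q < ∫ ω : Path n, max ((∑ i, tailCoords ω i) / n - K) 0 ∂Q +
        (1 / n : ℝ) * ∑ i : Fin n, (s₀ - ∫ x, x ∂(μ i)) + ε ∧
      Hedge s₀ (putPrice μ) (fun ω : Path n => max ((∑ i, tailCoords ω i) / n - K) 0) q := by
  obtain ⟨Q, hQ, h⟩ := bounded_duality hs₀ hprob hsupp hmom hne (asianBdd n s₀ K hK)
  refine ⟨Q, hQ, fun ε hε => ?_⟩
  obtain ⟨q, hq, hH⟩ := h ε hε
  have := hQ.1.1
  have i1 := integrable_asian hQ hmom K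
  have i2 : Integrable (fun ω : Path n => s₀ - (∑ i, tailCoords ω i) / n) Q :=
    (integrable_const _).sub (integrable_avg hQ hmom)
  refine ⟨q, ?_, ?_⟩
  · rw [← integral_avg hn hQ hmom, ← integral_add i1 i2]
    refine hq.trans_le (le_of_eq ?_)
    congr 1
    refine integral_congr_ae ?_
    filter_upwards [PiMu.ae_mem hQ.1] with ω hω using asianBdd_eq s₀ K hK ω hω
  · have := hH.add (Hedge.dyn (betaDyn n) (betaDyn_nonneg hn))
    rw [add_zero] at this
    refine this.mono fun ω hω => ?_
    rw [asianBdd_eq s₀ K hK ω hω, betaDyn_gains hn ω hω]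
    linarith

end Asian

/-- Asian option duality gap, Example 1: with `𝔓 = Ω`, the
recursively defined functions of the duality-gap theorem for the Asian payoff are
the constants `β_i = (n − i)/n`, and the put-based superhedging price exceeds the
primal value by `(1/n) Σ_{i=1}^n (s₀ − ∫ x μ_i(dx))`. -/
theorem asian_duality_gap
    {n : ℕ} (hn : 1 ≤ n) {s₀ : ℝ} (hs₀ : 0 < s₀) (K : ℝ) (hK : 0 ≤ K)
    (μ : Fin n → Measure ℝ) (hprob : ∀ i, IsProbabilityMeasure (μ i))
    (hsupp : ∀ i, μ i (Set.Iio 0) = 0) (hmom : ∀ i, Integrable (fun x => x) (μ i))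
    (hA : AssumptionA s₀ μ) (hne : (MSet s₀ μ).Nonempty) :
    (∀ β : (i : Fin (n + 1)) → (Fin i → ℝ) → ℝ,
      IsBetaFamily s₀ (Omega n s₀)
        (fun s => ((max ((∑ i, s i) / n - K) 0 : ℝ) : EReal)) β →
      ∀ (i : Fin n) (s : Fin i → ℝ), (∀ k, 0 ≤ s k) →
        β ⟨(i : ℕ), by have := i.isLt; omega⟩ s = ((n : ℝ) - (i : ℕ)) / n) ∧
    V Static.putPayoff (fun i K' => ∫ x, max (K' - x) 0 ∂(μ i)) (Omega n s₀)
        (fun ω => ((max ((∑ i, tailCoords ω i) / n - K) 0 : ℝ) : EReal)) =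
      (⨆ Q ∈ MSet s₀ μ,
        eexpE Q (fun ω => ((max ((∑ i, tailCoords ω i) / n - K) 0 : ℝ) : EReal))) +
        (((1 / n : ℝ) * ∑ i : Fin n, (s₀ - ∫ x, x ∂(μ i)) : ℝ) : EReal) := by
  refine ⟨fun β hβ i s hs => beta_eq hn hs₀ K β hβ (n - i) i _ (by have := i.isLt; omega) s hs,
    le_antisymm ?_ ?_⟩
  · obtain ⟨Q, hQ, h⟩ := asian_upper hn hs₀ K hK hprob hsupp hmom hne
    have h1 : V Static.putPayoff (fun i K' => ∫ x, max (K' - x) 0 ∂(μ i)) (Omega n s₀)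
        (fun ω => ((max ((∑ i, tailCoords ω i) / n - K) 0 : ℝ) : EReal)) ≤
        ((∫ ω : Path n, max ((∑ i, tailCoords ω i) / n - K) 0 ∂Q +
          (1 / n : ℝ) * ∑ i : Fin n, (s₀ - ∫ x, x ∂(μ i)) : ℝ) : EReal) := by
      refine EReal.le_of_forall_lt_iff_le.1 fun z hz => ?_
      have hz' := EReal.coe_lt_coe_iff.1 hz
      obtain ⟨q, hq, X, D, hD, hX, hH⟩ := h _ (sub_pos.2 hz')
      refine le_trans (sInf_le ⟨X, D, hD, rfl, fun ω hω => ?_⟩) ?_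
      · exact EReal.coe_le_coe_iff.2 (hH ω hω)
      · refine EReal.coe_le_coe_iff.2 (hX.le.trans ?_)
        linarith
    refine h1.trans ?_
    rw [EReal.coe_add]
    refine add_le_add ?_ le_rfl
    rw [← eexpE_asian hQ hmom K]
    exact le_iSup₂ (f := fun (Q : Measure (Path n)) (_ : Q ∈ MSet s₀ μ) =>
      eexpE Q (fun ω => ((max ((∑ i, tailCoords ω i) / n - K) 0 : ℝ) : EReal))) Q hQ
  · refine le_sInf ?_
    rintro _ ⟨X, D, hD, rfl, h⟩
    refine EReal.add_le_of_le_sub ?_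
    refine iSup₂_le fun Q hQ => ?_
    rw [eexpE_asian hQ hmom K, ← EReal.coe_sub]
    refine EReal.coe_le_coe_iff.2 ?_
    have := asian_lower hn hs₀ K hmom hQ X D fun ω hω => EReal.coe_le_coe_iff.1 (h ω hω)
    exact le_sub_iff_add_le.2 this

end RobustFin
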